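/- arXiv:2312.08969 — 9 statements merged into one kernel-verified Lean document; each statement's English description precedes it below -/
import Mathlib

section
/- Let u : ℝ × ℝ → ℝ be a smooth solution of the mKdV equation u_t − 6u²u_x + u_xxx = 0, let ζ ∈ ℝ, and let p, q : ℝ × ℝ → ℂ be smooth functions satisfying the Lax system p_x = iζp + uq, q_x = −iζq + up, p_t = (4iζ³ + 2iζu²)p + (4ζ²u − 2iζu_x + 2u³ − u_xx)q, q_t = (4ζ²u + 2iζu_x + 2u³ − u_xx)p + (−4iζ³ − 2iζu²)q. If p(x,t)² ≠ q(x,t)² for every (x,t) ∈ ℝ × ℝ, then the function û := u − 4iζ p q / (p² − q²) is a smooth (complex-valued) solution of the mKdV equation: û_t − 6û²û_x + û_xxx = 0 on ℝ × ℝ. -/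
noncomputable section

/-- Partial derivative in the first (spatial) variable for real-valued fields. -/
def ux (u : ℝ × ℝ → ℝ) (p : ℝ × ℝ) : ℝ := deriv (fun y => u (y, p.2)) p.1

/-- Partial derivative in the second (temporal) variable for real-valued fields. -/
def ut (u : ℝ × ℝ → ℝ) (p : ℝ × ℝ) : ℝ := deriv (fun s => u (p.1, s)) p.2

/-- Partial derivative in the first (spatial) variable for complex-valued fields. -/
def cx (f : ℝ × ℝ → ℂ) (p : ℝ × ℝ) : ℂ := deriv (fun y => f (y, p.2)) p.1

/-- Partial derivative in the second (temporal) variable for complex-valued fields. -/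
def ct (f : ℝ × ℝ → ℂ) (p : ℝ × ℝ) : ℂ := deriv (fun s => f (p.1, s)) p.2

lemma aux_hasx {E : Type*} [NormedAddCommGroup E] [NormedSpace ℝ E] {f : ℝ × ℝ → E}
    (hf : ContDiff ℝ (⊤ : ℕ∞) f) (w : ℝ × ℝ) :
    HasDerivAt (fun y => f (y, w.2)) (fderiv ℝ f w (1, 0)) w.1 := by
  have h1 : HasFDerivAt f (fderiv ℝ f w) (w.1, w.2) :=
    (hf.differentiable (by simp) w).hasFDerivAt
  have h2 : HasDerivAt (fun y : ℝ => (y, w.2)) ((1 : ℝ), (0 : ℝ)) w.1 :=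
    (hasDerivAt_id w.1).prodMk (hasDerivAt_const w.1 w.2)
  exact h1.comp_hasDerivAt w.1 h2

lemma aux_hast {E : Type*} [NormedAddCommGroup E] [NormedSpace ℝ E] {f : ℝ × ℝ → E}
    (hf : ContDiff ℝ (⊤ : ℕ∞) f) (w : ℝ × ℝ) :
    HasDerivAt (fun s => f (w.1, s)) (fderiv ℝ f w (0, 1)) w.2 := by
  have h1 : HasFDerivAt f (fderiv ℝ f w) (w.1, w.2) :=
    (hf.differentiable (by simp) w).hasFDerivAt
  have h2 : HasDerivAt (fun s : ℝ => (w.1, s)) ((0 : ℝ), (1 : ℝ)) w.2 :=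
    (hasDerivAt_const w.2 w.1).prodMk (hasDerivAt_id w.2)
  exact h1.comp_hasDerivAt w.2 h2

lemma aux_ux_smooth {u : ℝ × ℝ → ℝ} (hu : ContDiff ℝ (⊤ : ℕ∞) u) :
    ContDiff ℝ (⊤ : ℕ∞) (ux u) := by
  have : ux u = fun w => fderiv ℝ u w (1, 0) := funext fun w => (aux_hasx hu w).deriv
  rw [this]
  exact (hu.fderiv_right (by simp)).clm_apply contDiff_const

lemma aux_ux {u : ℝ × ℝ → ℝ} (hu : ContDiff ℝ (⊤ : ℕ∞) u) (w : ℝ × ℝ) :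
    HasDerivAt (fun y => ((u (y, w.2) : ℝ) : ℂ)) ((ux u w : ℝ) : ℂ) w.1 :=
  (aux_hasx hu w).differentiableAt.hasDerivAt.ofReal_comp

lemma aux_ut {u : ℝ × ℝ → ℝ} (hu : ContDiff ℝ (⊤ : ℕ∞) u) (w : ℝ × ℝ) :
    HasDerivAt (fun s => ((u (w.1, s) : ℝ) : ℂ)) ((ut u w : ℝ) : ℂ) w.2 :=
  (aux_hast hu w).differentiableAt.hasDerivAt.ofReal_comp

lemma aux_cx {f : ℝ × ℝ → ℂ} (hf : ContDiff ℝ (⊤ : ℕ∞) f) (w : ℝ × ℝ) :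
    HasDerivAt (fun y => f (y, w.2)) (cx f w) w.1 :=
  (aux_hasx hf w).differentiableAt.hasDerivAt

lemma aux_ct {f : ℝ × ℝ → ℂ} (hf : ContDiff ℝ (⊤ : ℕ∞) f) (w : ℝ × ℝ) :
    HasDerivAt (fun s => f (w.1, s)) (ct f w) w.2 :=
  (aux_hast hf w).differentiableAt.hasDerivAt

/-- The one-fold Darboux transformation of a smooth solution `u` of the defocusing mKdV
equation, generated by a solution `(p, q)` of the Lax system with real spectral parameter
`ζ` such that `p² ≠ q²` everywhere, is again a smooth (complex-valued) solution
of the mKdV equation. -/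
theorem darboux_transform_solves_mkdv
    (u : ℝ × ℝ → ℝ) (hu : ContDiff ℝ (⊤ : ℕ∞) u)
    (hmkdv : ∀ p : ℝ × ℝ, ut u p - 6 * (u p) ^ 2 * ux u p + ux (ux (ux u)) p = 0)
    (ζ : ℝ) (pf qf : ℝ × ℝ → ℂ)
    (hpf : ContDiff ℝ (⊤ : ℕ∞) pf) (hqf : ContDiff ℝ (⊤ : ℕ∞) qf)
    (hLax1 : ∀ w : ℝ × ℝ, cx pf w = Complex.I * (ζ : ℂ) * pf w + (u w : ℂ) * qf w)
    (hLax2 : ∀ w : ℝ × ℝ, cx qf w = -(Complex.I * (ζ : ℂ)) * qf w + (u w : ℂ) * pf w)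
    (hLax3 : ∀ w : ℝ × ℝ, ct pf w =
      (4 * Complex.I * (ζ : ℂ) ^ 3 + 2 * Complex.I * (ζ : ℂ) * (u w : ℂ) ^ 2) * pf w +
      (4 * (ζ : ℂ) ^ 2 * (u w : ℂ) - 2 * Complex.I * (ζ : ℂ) * (ux u w : ℂ)
        + 2 * (u w : ℂ) ^ 3 - (ux (ux u) w : ℂ)) * qf w)
    (hLax4 : ∀ w : ℝ × ℝ, ct qf w =
      (4 * (ζ : ℂ) ^ 2 * (u w : ℂ) + 2 * Complex.I * (ζ : ℂ) * (ux u w : ℂ)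
        + 2 * (u w : ℂ) ^ 3 - (ux (ux u) w : ℂ)) * pf w +
      (-(4 * Complex.I * (ζ : ℂ) ^ 3) - 2 * Complex.I * (ζ : ℂ) * (u w : ℂ) ^ 2) * qf w)
    (hne : ∀ w : ℝ × ℝ, pf w ^ 2 ≠ qf w ^ 2) :
    ContDiff ℝ (⊤ : ℕ∞) (fun w : ℝ × ℝ =>
        (u w : ℂ) - 4 * Complex.I * (ζ : ℂ) * pf w * qf w / (pf w ^ 2 - qf w ^ 2)) ∧
    (∀ w : ℝ × ℝ,
      ct (fun w : ℝ × ℝ =>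
          (u w : ℂ) - 4 * Complex.I * (ζ : ℂ) * pf w * qf w / (pf w ^ 2 - qf w ^ 2)) w
      - 6 * ((u w : ℂ) - 4 * Complex.I * (ζ : ℂ) * pf w * qf w / (pf w ^ 2 - qf w ^ 2)) ^ 2
          * cx (fun w : ℝ × ℝ =>
              (u w : ℂ) - 4 * Complex.I * (ζ : ℂ) * pf w * qf w / (pf w ^ 2 - qf w ^ 2)) w
      + cx (cx (cx (fun w : ℝ × ℝ =>
          (u w : ℂ) - 4 * Complex.I * (ζ : ℂ) * pf w * qf w / (pf w ^ 2 - qf w ^ 2)))) w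
      = 0) := by
  have hd : ∀ w, pf w ^ 2 - qf w ^ 2 ≠ 0 := fun w => sub_ne_zero.mpr (hne w)
  have huc : ContDiff ℝ (⊤ : ℕ∞) (fun w => ((u w : ℝ) : ℂ)) :=
    Complex.ofRealCLM.contDiff.comp hu
  refine ⟨?_, ?_⟩
  · simp only [div_eq_mul_inv]
    exact huc.sub (((contDiff_const.mul hpf).mul hqf).mul
      (((hpf.pow 2).sub (hqf.pow 2)).inv hd))
  have hu1 := aux_ux_smooth hu
  have hu2 := aux_ux_smooth hu1
  obtain ⟨S, hS⟩ : ∃ S : ℝ × ℝ → ℂ, ∀ w, S w = pf w * qf w / (pf w ^ 2 - qf w ^ 2) :=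
    ⟨_, fun _ => rfl⟩
  obtain ⟨R, hR⟩ : ∃ R : ℝ × ℝ → ℂ,
      ∀ w, R w = (pf w ^ 2 + qf w ^ 2) / (pf w ^ 2 - qf w ^ 2) := ⟨_, fun _ => rfl⟩
  have hRS : ∀ w, R w ^ 2 = 1 + 4 * S w ^ 2 := by
    intro w
    have := hd w
    rw [hR, hS]
    field_simp
    ring
  have hp := aux_cx hpf
  have hq := aux_cx hqf
  have hpt := aux_ct hpf
  have hqt := aux_ct hqf
  have hSx : ∀ w : ℝ × ℝ, HasDerivAt (fun y => S (y, w.2))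
      ((u w : ℂ) * R w - 2 * Complex.I * ζ * S w * R w) w.1 := by
    intro w
    have := hd w
    simp only [hS]
    refine (((hp w).mul (hq w)).div (((hp w).pow 2).sub ((hq w).pow 2)) (hd w)).congr_deriv ?_
    simp only [hR, hLax1, hLax2, Pi.mul_apply, Pi.sub_apply, Pi.pow_apply, Prod.mk.eta]
    field_simp
    ring
  have hRx : ∀ w : ℝ × ℝ, HasDerivAt (fun y => R (y, w.2))
      (4 * (u w : ℂ) * S w - 8 * Complex.I * ζ * S w ^ 2) w.1 := by
    intro w
    have := hd w
    simp only [hR]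
    refine ((((hp w).pow 2).add ((hq w).pow 2)).div (((hp w).pow 2).sub ((hq w).pow 2)) (hd w)).congr_deriv ?_
    simp only [hS, hLax1, hLax2, Pi.add_apply, Pi.sub_apply, Pi.pow_apply, Prod.mk.eta]
    field_simp
    ring
  have hSt : ∀ w : ℝ × ℝ, HasDerivAt (fun s => S (w.1, s))
      ((4 * ζ ^ 2 * u w + 2 * u w ^ 3 - ux (ux u) w) * R w + 2 * Complex.I * ζ * ux u w
        - 2 * (4 * Complex.I * ζ ^ 3 + 2 * Complex.I * ζ * u w ^ 2) * S w * R w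
        + 4 * (2 * Complex.I * ζ * ux u w) * S w ^ 2) w.2 := by
    intro w
    have := hd w
    simp only [hS]
    refine (((hpt w).mul (hqt w)).div (((hpt w).pow 2).sub ((hqt w).pow 2)) (hd w)).congr_deriv ?_
    simp only [hR, hLax3, hLax4, Pi.mul_apply, Pi.sub_apply, Pi.pow_apply, Prod.mk.eta]
    field_simp
    ring
  have hU : ∀ w, (u w : ℂ) - 4 * Complex.I * (ζ : ℂ) * pf w * qf w / (pf w ^ 2 - qf w ^ 2)
      = u w - 4 * Complex.I * ζ * S w := by
    intro w
    rw [hS]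
    ring
  simp only [hU]
  have e1 : cx (fun w => (u w : ℂ) - 4 * Complex.I * ζ * S w) = fun w =>
      (ux u w : ℂ) - 4 * Complex.I * ζ * (u w * R w) - 8 * ζ ^ 2 * (S w * R w) := by
    funext w
    refine (((aux_ux hu w).sub ((hSx w).const_mul (4 * Complex.I * (ζ : ℂ)))).deriv).trans ?_
    linear_combination (8 * ζ ^ 2 * S w * R w) * Complex.I_sq
  have e2 : cx (fun w =>
      (ux u w : ℂ) - 4 * Complex.I * ζ * (u w * R w) - 8 * ζ ^ 2 * (S w * R w)) = fun w =>
      (ux (ux u) w : ℂ) - 4 * Complex.I * ζ * (ux u w * R w)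
      - 16 * Complex.I * ζ * (u w ^ 2 * S w) - 8 * ζ ^ 2 * u w
      - 96 * ζ ^ 2 * (u w * S w ^ 2)
      + 16 * Complex.I * ζ ^ 3 * S w + 128 * Complex.I * ζ ^ 3 * S w ^ 3 := by
    funext w
    refine ((((aux_ux hu1 w).sub (((aux_ux hu w).mul (hRx w)).const_mul
      (4 * Complex.I * (ζ : ℂ)))).sub (((hSx w).mul (hRx w)).const_mul
      (8 * (ζ : ℂ) ^ 2))).deriv).trans ?_
    have := hRS w
    have := Complex.I_sq
    simp only [Prod.mk.eta]
    generalize Complex.I = i at *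
    generalize (ux (ux u) w : ℂ) = u2 at *
    generalize (ux u w : ℂ) = u1 at *
    generalize (u w : ℂ) = u0 at *
    generalize S w = s at *
    generalize R w = r at *
    generalize (ζ : ℂ) = z at *
    clear hmkdv hLax1 hLax2 hLax3 hLax4 hne hd hS hR hRS hp hq hpt hqt hSx hRx hSt hU e1
    grind
  rw [e1, e2]
  intro w
  have e3 := (((((((aux_ux hu2 w).sub (((aux_ux hu1 w).mul (hRx w)).const_mul
      (4 * Complex.I * (ζ : ℂ)))).sub ((((aux_ux hu w).pow 2).mul (hSx w)).const_mul
      (16 * Complex.I * (ζ : ℂ)))).sub ((aux_ux hu w).const_mul (8 * (ζ : ℂ) ^ 2))).sub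
      (((aux_ux hu w).mul ((hSx w).pow 2)).const_mul (96 * (ζ : ℂ) ^ 2))).add
      ((hSx w).const_mul (16 * Complex.I * (ζ : ℂ) ^ 3))).add
      (((hSx w).pow 3).const_mul (128 * Complex.I * (ζ : ℂ) ^ 3))).deriv
  have e4 := ((aux_ut hu w).sub ((hSt w).const_mul (4 * Complex.I * (ζ : ℂ)))).deriv
  have hm : (ut u w : ℂ) - 6 * (u w : ℂ) ^ 2 * ux u w + ux (ux (ux u)) w = 0 := by
    exact_mod_cast congrArg (fun r : ℝ => (r : ℂ)) (hmkdv w)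
  refine (congrArg₂ (fun a b : ℂ => a - 6 * (u w - 4 * Complex.I * ζ * S w) ^ 2 * _ + b)
    e4 e3).trans ?_
  have h1 := hRS w
  have h2 := Complex.I_sq
  simp only [Pi.mul_apply, Pi.pow_apply, Prod.mk.eta]
  generalize Complex.I = i at *
  generalize (ux (ux (ux u)) w : ℂ) = u3 at *
  generalize (ux (ux u) w : ℂ) = u2 at *
  generalize (ux u w : ℂ) = u1 at *
  generalize (ut u w : ℂ) = u_t at *
  generalize (u w : ℂ) = u0 at *
  generalize S w = s at *
  generalize R w = r at *
  generalize (ζ : ℂ) = z at *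
  clear * - hm h1 h2
  obtain rfl : u3 = 6 * u0 ^ 2 * u1 - u_t := by linear_combination hm
  push_cast
  grind

end
end

section
/- Let k ∈ (0,1). The function u(x,t) := k·sn(x + (1+k²)t; k) is smooth on ℝ × ℝ and satisfies the mKdV equation u_t − 6u²u_x + u_xxx = 0 at every point (x,t). -/
noncomputable section

/-- For `k ∈ (0,1)` and the Jacobi elliptic function `sn(·;k)` (characterized as the first
component of the unique global solution of `s' = c·d, c' = −s·d, d' = −k²·s·c` with
`s(0)=0, c(0)=1, d(0)=1`), the snoidal traveling wave `u(x,t) = k·sn(x + (1+k²)t; k)`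
is smooth and solves the defocusing mKdV equation `u_t − 6u²u_x + u_xxx = 0`. -/
theorem snoidal_wave_solves_mkdv
    (k : ℝ) (hk : k ∈ Set.Ioo (0 : ℝ) 1)
    (sn cn dn : ℝ → ℝ)
    (hsn : ∀ x, HasDerivAt sn (cn x * dn x) x)
    (hcn : ∀ x, HasDerivAt cn (-(sn x * dn x)) x)
    (hdn : ∀ x, HasDerivAt dn (-(k ^ 2 * sn x * cn x)) x)
    (hsn0 : sn 0 = 0) (hcn0 : cn 0 = 1) (hdn0 : dn 0 = 1) :
    ContDiff ℝ (⊤ : ℕ∞) (fun w : ℝ × ℝ => k * sn (w.1 + (1 + k ^ 2) * w.2)) ∧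
    (∀ p : ℝ × ℝ,
      ut (fun w : ℝ × ℝ => k * sn (w.1 + (1 + k ^ 2) * w.2)) p
      - 6 * (k * sn (p.1 + (1 + k ^ 2) * p.2)) ^ 2
          * ux (fun w : ℝ × ℝ => k * sn (w.1 + (1 + k ^ 2) * w.2)) p
      + ux (ux (ux (fun w : ℝ × ℝ => k * sn (w.1 + (1 + k ^ 2) * w.2)))) p = 0) := by
  have hc : ∀ x, sn x ^ 2 + cn x ^ 2 = 1 := by
    have hd : ∀ x, HasDerivAt (fun x => sn x ^ 2 + cn x ^ 2) 0 x := by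
      intro x
      refine HasDerivAt.congr_deriv (((hsn x).pow 2).add ((hcn x).pow 2)) ?_
      push_cast
      ring
    intro x
    have h := is_const_of_deriv_eq_zero (fun x => (hd x).differentiableAt)
      (fun x => (hd x).deriv) x 0
    simp only [hsn0, hcn0] at h
    rw [h]; norm_num
  have hdd : ∀ x, k ^ 2 * sn x ^ 2 + dn x ^ 2 = 1 := by
    have hd : ∀ x, HasDerivAt (fun x => k ^ 2 * sn x ^ 2 + dn x ^ 2) 0 x := by
      intro x
      refine HasDerivAt.congr_deriv ((((hsn x).pow 2).const_mul (k ^ 2)).add ((hdn x).pow 2)) ?_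
      push_cast
      ring
    intro x
    have h := is_const_of_deriv_eq_zero (fun x => (hd x).differentiableAt)
      (fun x => (hd x).deriv) x 0
    simp only [hsn0, hdn0] at h
    rw [h]; norm_num
  have hsm : ∀ n : ℕ, ContDiff ℝ n sn ∧ ContDiff ℝ n cn ∧ ContDiff ℝ n dn := by
    intro n
    induction n with
    | zero =>
      simp only [Nat.cast_zero, contDiff_zero]
      exact ⟨continuous_iff_continuousAt.2 fun x => (hsn x).continuousAt,
        continuous_iff_continuousAt.2 fun x => (hcn x).continuousAt,
        continuous_iff_continuousAt.2 fun x => (hdn x).continuousAt⟩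
    | succ n ih =>
      obtain ⟨h1, h2, h3⟩ := ih
      have key : ∀ f f' : ℝ → ℝ, (∀ x, HasDerivAt f (f' x) x) → ContDiff ℝ n f' →
          ContDiff ℝ ((n + 1 : ℕ) : WithTop ℕ∞) f := by
        intro f f' hf hf'
        have e : deriv f = f' := funext fun x => (hf x).deriv
        push_cast
        rw [contDiff_succ_iff_deriv]
        refine ⟨fun x => (hf x).differentiableAt, by simp, ?_⟩
        rw [e]; exact hf'
      exact ⟨key _ _ hsn (h2.mul h3), key _ _ hcn (h1.mul h3).neg,
        key _ _ hdn ((contDiff_const.mul h1).mul h2).neg⟩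
  have hS : ContDiff ℝ (⊤ : ℕ∞) sn := contDiff_infty.2 fun n => (hsm n).1
  refine ⟨contDiff_const.mul (hS.comp (by fun_prop)), ?_⟩
  have hin : ∀ a y : ℝ, HasDerivAt (fun y : ℝ => y + a) 1 y := fun a y =>
    (hasDerivAt_id y).add_const a
  have gen : ∀ f f' : ℝ → ℝ, (∀ x, HasDerivAt f (f' x) x) →
      ux (fun w : ℝ × ℝ => f (w.1 + (1 + k ^ 2) * w.2)) =
        fun w : ℝ × ℝ => f' (w.1 + (1 + k ^ 2) * w.2) := by
    intro f f' hf
    funext p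
    have h := (hf (p.1 + (1 + k ^ 2) * p.2)).comp p.1 (hin ((1 + k ^ 2) * p.2) p.1)
    rw [mul_one] at h
    exact h.deriv
  have e1 := gen (fun z => k * sn z) (fun z => k * (cn z * dn z))
    (fun z => (hsn z).const_mul k)
  have e2 := gen (fun z => k * (cn z * dn z))
    (fun z => -k * (sn z * (dn z ^ 2 + k ^ 2 * cn z ^ 2))) (fun z => by
      refine HasDerivAt.congr_deriv (((hcn z).mul (hdn z)).const_mul k) ?_
      ring)
  have e3 := gen (fun z => -k * (sn z * (dn z ^ 2 + k ^ 2 * cn z ^ 2)))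
    (fun z => -k * (cn z * dn z * (dn z ^ 2 + k ^ 2 * cn z ^ 2 - 4 * k ^ 2 * sn z ^ 2)))
    (fun z => by
      refine HasDerivAt.congr_deriv (((hsn z).mul (((hdn z).pow 2).add
        (((hcn z).pow 2).const_mul (k ^ 2)))).const_mul (-k)) ?_
      simp only [Pi.add_apply, Pi.pow_apply]
      push_cast
      ring)
  intro p
  have et : ut (fun w : ℝ × ℝ => k * sn (w.1 + (1 + k ^ 2) * w.2)) p =
      k * (cn (p.1 + (1 + k ^ 2) * p.2) * dn (p.1 + (1 + k ^ 2) * p.2)) * (1 + k ^ 2) := by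
    have hi : HasDerivAt (fun s : ℝ => p.1 + (1 + k ^ 2) * s) (1 + k ^ 2) p.2 := by
      simpa using ((hasDerivAt_id p.2).const_mul (1 + k ^ 2)).const_add p.1
    exact (((hsn (p.1 + (1 + k ^ 2) * p.2)).const_mul k).comp p.2 hi).deriv
  beta_reduce at e1 e2 e3
  rw [et, e1, e2, e3]
  beta_reduce
  generalize p.1 + (1 + k ^ 2) * p.2 = z
  have h1 := hc z
  have h2 := hdd z
  linear_combination (-k * cn z * dn z * k ^ 2) * h1 + (-k * cn z * dn z) * h2

end
end

section
/- Let k ∈ (0,1), ζ ∈ ℝ, ω ∈ ℂ, and let a, b ∈ ℝ satisfy b² = a⁴ − (1+k²)a² + k² (the values φ₀(x), φ₀'(x) of a function satisfying the first-order invariant, with the second-order equation φ₀'' = 2φ₀³ − (1+k²)φ₀ substituted). Then the determinant of the 2×2 complex matrix [[iζ(4ζ² + 2a² − 1 − k²) − ω, 4ζ²a − 2iζb],[4ζ²a + 2iζb, −iζ(4ζ² + 2a² − 1 − k²) − ω]] equals ω² + 16ζ²·P(ζ), where P(ζ) := ζ⁴ − (1/2)(1+k²)ζ² + (1/16)(1−k²)².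 In particular the determinant vanishes if and only if ω² = −16ζ²P(ζ), and moreover P(ζ) = (ζ² − ζ₊²)(ζ² − ζ₋²) with ζ₊ = (1+k)/2 and ζ₋ = (1−k)/2. -/
/-- The determinant of the algebraic compatibility matrix of the time evolution of the
Lax system on the snoidal potential equals `ω² + 16ζ²P(ζ)`, with
`P(ζ) = ζ⁴ − (1/2)(1+k²)ζ² + (1/16)(1−k²)²`; in particular it vanishes iff
`ω² = −16ζ²P(ζ)`, and `P(ζ) = (ζ² − ζ₊²)(ζ² − ζ₋²)` with `ζ₊ = (1+k)/2`, `ζ₋ = (1−k)/2`. -/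
theorem lax_time_evolution_determinant
    (k : ℝ) (hk : k ∈ Set.Ioo (0 : ℝ) 1) (ζ : ℝ) (ω : ℂ) (a b : ℝ)
    (hab : b ^ 2 = a ^ 4 - (1 + k ^ 2) * a ^ 2 + k ^ 2) :
    (Matrix.det
      !![Complex.I * (ζ : ℂ) * (4 * (ζ : ℂ) ^ 2 + 2 * (a : ℂ) ^ 2 - 1 - (k : ℂ) ^ 2) - ω,
         4 * (ζ : ℂ) ^ 2 * (a : ℂ) - 2 * Complex.I * (ζ : ℂ) * (b : ℂ);
         4 * (ζ : ℂ) ^ 2 * (a : ℂ) + 2 * Complex.I * (ζ : ℂ) * (b : ℂ),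
         -(Complex.I * (ζ : ℂ) * (4 * (ζ : ℂ) ^ 2 + 2 * (a : ℂ) ^ 2 - 1 - (k : ℂ) ^ 2)) - ω]
      = ω ^ 2 + 16 * (ζ : ℂ) ^ 2 *
          ((ζ : ℂ) ^ 4 - (1 / 2) * (1 + (k : ℂ) ^ 2) * (ζ : ℂ) ^ 2
            + (1 / 16) * (1 - (k : ℂ) ^ 2) ^ 2)) ∧
    (Matrix.det
      !![Complex.I * (ζ : ℂ) * (4 * (ζ : ℂ) ^ 2 + 2 * (a : ℂ) ^ 2 - 1 - (k : ℂ) ^ 2) - ω,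
         4 * (ζ : ℂ) ^ 2 * (a : ℂ) - 2 * Complex.I * (ζ : ℂ) * (b : ℂ);
         4 * (ζ : ℂ) ^ 2 * (a : ℂ) + 2 * Complex.I * (ζ : ℂ) * (b : ℂ),
         -(Complex.I * (ζ : ℂ) * (4 * (ζ : ℂ) ^ 2 + 2 * (a : ℂ) ^ 2 - 1 - (k : ℂ) ^ 2)) - ω]
      = 0 ↔
      ω ^ 2 = -(16 * (ζ : ℂ) ^ 2 *
          ((ζ : ℂ) ^ 4 - (1 / 2) * (1 + (k : ℂ) ^ 2) * (ζ : ℂ) ^ 2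
            + (1 / 16) * (1 - (k : ℂ) ^ 2) ^ 2))) ∧
    (ζ ^ 4 - (1 / 2) * (1 + k ^ 2) * ζ ^ 2 + (1 / 16) * (1 - k ^ 2) ^ 2
      = (ζ ^ 2 - ((1 + k) / 2) ^ 2) * (ζ ^ 2 - ((1 - k) / 2) ^ 2)) := by
  have hb : (b : ℂ) ^ 2 = (a : ℂ) ^ 4 - (1 + (k : ℂ) ^ 2) * (a : ℂ) ^ 2 + (k : ℂ) ^ 2 := by
    exact_mod_cast congrArg (fun x : ℝ => (x : ℂ)) hab
  have hI := Complex.I_sq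
  refine (fun h => ⟨h, by rw [h]; exact add_eq_zero_iff_eq_neg, by ring⟩) ?_
  · rw [Matrix.det_fin_two_of]
    linear_combination (-4 * (ζ : ℂ) ^ 2) * hb +
      (-(ζ : ℂ) ^ 2 * (4 * (ζ : ℂ) ^ 2 + 2 * (a : ℂ) ^ 2 - 1 - (k : ℂ) ^ 2) ^ 2
        + 4 * (ζ : ℂ) ^ 2 * (b : ℂ) ^ 2) * hI
end

section
/- Let k ∈ (0,1) and define, for α ∈ (0, K(k)), κ(α) := Z(α;k) + k·sn(α;k)·cn(α;k)·dn(α;k)/(1 + k·sn(α;k)²) and ζ(α) := ((1+k)/2)·(1 − k·sn(α;k)²)/(1 + k·sn(α;k)²). Then κ is differentiable on (0, K(k)) and there is exactly one point α₀ ∈ (0, K(k)) with κ'(α₀) = 0; at this point ζ(α₀) = √(E(k)/(2K(k)) − (1−k²)/4); moreover κ attains its global maximum over (0, K(k)) at α₀, being strictly monotone on each of (0, α₀) and (α₀, K(k)). -/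
noncomputable section

/-- The complete elliptic integral of the first kind. -/
def Kcomp (k : ℝ) : ℝ :=
  ∫ θ in (0 : ℝ)..(Real.pi / 2), (Real.sqrt (1 - k ^ 2 * Real.sin θ ^ 2))⁻¹

/-- The complete elliptic integral of the second kind. -/
def Ecomp (k : ℝ) : ℝ :=
  ∫ θ in (0 : ℝ)..(Real.pi / 2), Real.sqrt (1 - k ^ 2 * Real.sin θ ^ 2)

/-- The Jacobi zeta function `Z(α;k) = ∫₀^α dn(t;k)² dt − (E/K)·α`. -/
def Zjac (k : ℝ) (dn : ℝ → ℝ) (α : ℝ) : ℝ :=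
  (∫ t in (0 : ℝ)..α, (dn t) ^ 2) - (Ecomp k / Kcomp k) * α

/-- The inverse localization width of the dark breather,
`κ(α) = Z(α;k) + k·sn(α)cn(α)dn(α)/(1 + k·sn²(α))`. -/
def kapWidth (k : ℝ) (sn cn dn : ℝ → ℝ) (α : ℝ) : ℝ :=
  Zjac k dn α + k * sn α * cn α * dn α / (1 + k * (sn α) ^ 2)

/-- The spectral parameter determined by the characteristic equation,
`ζ(α) = ((1+k)/2)(1 − k·sn²(α))/(1 + k·sn²(α))`. -/
def zetaChar (k : ℝ) (sn : ℝ → ℝ) (α : ℝ) : ℝ :=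
  ((1 + k) / 2) * (1 - k * (sn α) ^ 2) / (1 + k * (sn α) ^ 2)

lemma aux_sq (k : ℝ) (sn cn dn : ℝ → ℝ)
    (hsn : ∀ x, HasDerivAt sn (cn x * dn x) x)
    (hcn : ∀ x, HasDerivAt cn (-(sn x * dn x)) x)
    (hdn : ∀ x, HasDerivAt dn (-(k ^ 2 * sn x * cn x)) x)
    (hsn0 : sn 0 = 0) (hcn0 : cn 0 = 1) (hdn0 : dn 0 = 1) (x : ℝ) :
    cn x ^ 2 = 1 - sn x ^ 2 ∧ dn x ^ 2 = 1 - k ^ 2 * sn x ^ 2 := by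
  have h1 : ∀ x, HasDerivAt (fun x => cn x ^ 2 + sn x ^ 2) 0 x := fun x => by
    refine HasDerivAt.congr_deriv (((hcn x).pow 2).add ((hsn x).pow 2)) ?_
    push_cast; ring
  have h2 : ∀ x, HasDerivAt (fun x => dn x ^ 2 + k ^ 2 * sn x ^ 2) 0 x := fun x => by
    refine HasDerivAt.congr_deriv (((hdn x).pow 2).add (((hsn x).pow 2).const_mul (k ^ 2))) ?_
    push_cast; ring
  have e1 := is_const_of_deriv_eq_zero (fun x => (h1 x).differentiableAt)
    (fun x => (h1 x).deriv) x 0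
  have e2 := is_const_of_deriv_eq_zero (fun x => (h2 x).differentiableAt)
    (fun x => (h2 x).deriv) x 0
  simp only [hsn0, hcn0, hdn0] at e1 e2
  constructor <;> linarith

lemma aux_rad (k : ℝ) (hk : k ∈ Set.Ioo (0 : ℝ) 1) (s : ℝ) (hs : s ^ 2 ≤ 1) :
    1 - k < 1 - k ^ 2 * s ^ 2 := by
  obtain ⟨h0, h1⟩ := hk
  nlinarith [mul_le_mul_of_nonneg_left hs (sq_nonneg k)]

lemma aux_rad_sin (k : ℝ) (hk : k ∈ Set.Ioo (0 : ℝ) 1) (t : ℝ) :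
    1 - k < 1 - k ^ 2 * Real.sin t ^ 2 :=
  aux_rad k hk _ (Real.sin_sq_le_one t)

lemma aux_cont (k : ℝ) (hk : k ∈ Set.Ioo (0 : ℝ) 1) :
    Continuous (fun θ : ℝ => (Real.sqrt (1 - k ^ 2 * Real.sin θ ^ 2))⁻¹) := by
  refine Continuous.inv₀ (by fun_prop) (fun t => ?_)
  have := aux_rad_sin k hk t
  exact (Real.sqrt_pos.2 (by linarith [hk.2])).ne'

lemma aux_EK (k : ℝ) (hk : k ∈ Set.Ioo (0 : ℝ) 1) :
    0 < Kcomp k ∧ 1 - k < Ecomp k / Kcomp k ∧ Ecomp k / Kcomp k < 1 + k := by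
  have hc := aux_cont k hk
  have hc' : Continuous (fun θ : ℝ => Real.sqrt (1 - k ^ 2 * Real.sin θ ^ 2)) := by fun_prop
  have hcm : ∀ a : ℝ, Continuous
      (fun θ : ℝ => a * (Real.sqrt (1 - k ^ 2 * Real.sin θ ^ 2))⁻¹) :=
    fun a => continuous_const.mul hc
  have hpos : ∀ t, 0 < Real.sqrt (1 - k ^ 2 * Real.sin t ^ 2) := fun t =>
    Real.sqrt_pos.2 (by linarith [hk.2, aux_rad_sin k hk t])
  have hpi : (0 : ℝ) < Real.pi / 2 := by positivity
  have hK : 0 < Kcomp k :=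
    intervalIntegral.intervalIntegral_pos_of_pos (hc.intervalIntegrable _ _)
      (fun t => inv_pos.2 (hpos t)) hpi
  refine ⟨hK, ?_, ?_⟩
  · rw [lt_div_iff₀ hK, ← sub_pos]
    unfold Ecomp Kcomp
    rw [← intervalIntegral.integral_const_mul, ← intervalIntegral.integral_sub
      (hc'.intervalIntegrable _ _) ((hcm _).intervalIntegrable _ _)]
    refine intervalIntegral.intervalIntegral_pos_of_pos
      ((hc'.sub (hcm _)).intervalIntegrable _ _) (fun t => ?_) hpi
    have h1 := hpos t
    have h2 := aux_rad_sin k hk t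
    rw [sub_pos, ← div_eq_mul_inv, div_lt_iff₀ h1, Real.mul_self_sqrt (by linarith [hk.2])]
    exact h2
  · rw [div_lt_iff₀ hK, ← sub_pos]
    unfold Ecomp Kcomp
    rw [← intervalIntegral.integral_const_mul, ← intervalIntegral.integral_sub
      ((hcm _).intervalIntegrable _ _) (hc'.intervalIntegrable _ _)]
    refine intervalIntegral.intervalIntegral_pos_of_pos
      (((hcm _).sub hc').intervalIntegrable _ _) (fun t => ?_) hpi
    have h1 := hpos t
    have h2 := aux_rad_sin k hk t
    rw [sub_pos, ← div_eq_mul_inv, lt_div_iff₀ h1, Real.mul_self_sqrt (by linarith [hk.2])]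
    nlinarith [hk.1, sq_nonneg (k * Real.sin t)]

lemma aux_dpos (k : ℝ) (hk : k ∈ Set.Ioo (0 : ℝ) 1) (dn : ℝ → ℝ) (hc : Continuous dn)
    (h : ∀ x, dn x ≠ 0) (hdn0 : dn 0 = 1) (x : ℝ) : 0 < dn x := by
  by_contra hx
  have := mem_range_of_exists_le_of_exists_ge hc ⟨x, not_lt.1 hx⟩ ⟨0, by rw [hdn0]; norm_num⟩
  obtain ⟨y, hy⟩ := this
  exact h y hy

lemma aux_sn (k : ℝ) (hk : k ∈ Set.Ioo (0 : ℝ) 1)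
    (sn cn dn : ℝ → ℝ)
    (hsn : ∀ x, HasDerivAt sn (cn x * dn x) x)
    (hcn : ∀ x, HasDerivAt cn (-(sn x * dn x)) x)
    (hdn : ∀ x, HasDerivAt dn (-(k ^ 2 * sn x * cn x)) x)
    (hsn0 : sn 0 = 0) (hcn0 : cn 0 = 1) (hdn0 : dn 0 = 1) :
    sn (Kcomp k) = 1 ∧ StrictMonoOn sn (Set.Icc 0 (Kcomp k)) := by
  have hsq := aux_sq k sn cn dn hsn hcn hdn hsn0 hcn0 hdn0
  have hdc : Continuous dn := continuous_iff_continuousAt.2 fun x => (hdn x).continuousAt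
  have hs1 : ∀ x, sn x ^ 2 ≤ 1 := fun x => by nlinarith [(hsq x).1, sq_nonneg (cn x)]
  have hdp : ∀ x, 0 < dn x := aux_dpos k hk dn hdc (fun x hx => by
    have := aux_rad k hk (sn x) (hs1 x)
    rw [← (hsq x).2, hx] at this
    linarith [hk.2]) hdn0
  set φ : ℝ → ℝ := fun t => ∫ u in (0 : ℝ)..t, dn u with hφ
  have hφd : ∀ t, HasDerivAt φ (dn t) t := fun t => hdc.integral_hasStrictDerivAt 0 t |>.hasDerivAt
  have hφ0 : φ 0 = 0 := by simp [hφ]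
  have hφm : StrictMono φ := strictMono_of_deriv_pos fun x => by rw [(hφd x).deriv]; exact hdp x
  have hP : ∀ x, HasDerivAt (fun x => sn x * Real.sin (φ x) + cn x * Real.cos (φ x)) 0 x :=
    fun x => by
      refine HasDerivAt.congr_deriv (((hsn x).mul (hφd x).sin).add ((hcn x).mul (hφd x).cos)) ?_
      ring
  have hsin : ∀ x, sn x = Real.sin (φ x) := fun x => by
    have e := is_const_of_deriv_eq_zero (fun x => (hP x).differentiableAt)
      (fun x => (hP x).deriv) x 0
    simp only [hsn0, hcn0, hφ0, Real.sin_zero, Real.cos_zero] at e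
    have h0 : (sn x - Real.sin (φ x)) ^ 2 = 0 := by
      apply le_antisymm _ (sq_nonneg _)
      nlinarith [(hsq x).1, Real.sin_sq_add_cos_sq (φ x), sq_nonneg (cn x - Real.cos (φ x))]
    have := pow_eq_zero_iff (two_ne_zero) |>.1 h0
    linarith
  have hc := aux_cont k hk
  set F : ℝ → ℝ := fun y => ∫ θ in (0 : ℝ)..y, (Real.sqrt (1 - k ^ 2 * Real.sin θ ^ 2))⁻¹ with hF
  have hFd : ∀ y, HasDerivAt F ((Real.sqrt (1 - k ^ 2 * Real.sin y ^ 2))⁻¹) y :=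
    fun y => hc.integral_hasStrictDerivAt 0 y |>.hasDerivAt
  have hFm : StrictMono F := strictMono_of_deriv_pos fun y => by
    rw [(hFd y).deriv]
    exact inv_pos.2 (Real.sqrt_pos.2 (by linarith [hk.2, aux_rad_sin k hk y]))
  have hG : ∀ t, HasDerivAt (fun t => F (φ t) - t) 0 t := fun t => by
    refine HasDerivAt.congr_deriv (((hFd (φ t)).comp t (hφd t)).sub (hasDerivAt_id t)) ?_
    rw [← hsin, ← (hsq t).2, Real.sqrt_sq (hdp t).le, inv_mul_cancel₀ (hdp t).ne', sub_self]
  have hFK : φ (Kcomp k) = Real.pi / 2 := by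
    have e := is_const_of_deriv_eq_zero (fun x => (hG x).differentiableAt)
      (fun x => (hG x).deriv) (Kcomp k) 0
    have hF0 : F 0 = 0 := by simp [hF]
    simp only [hφ0, hF0] at e
    apply hFm.injective
    have : F (Real.pi / 2) = Kcomp k := rfl
    linarith
  refine ⟨by rw [hsin, hFK, Real.sin_pi_div_two], ?_⟩
  intro a ha b hb hab
  rw [hsin, hsin]
  have ha0 : φ 0 ≤ φ a := hφm.monotone ha.1
  have hbK : φ b ≤ φ (Kcomp k) := hφm.monotone hb.2
  rw [hφ0] at ha0
  rw [hFK] at hbK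
  exact Real.sin_lt_sin_of_lt_of_le_pi_div_two (by linarith [Real.pi_pos]) hbK (hφm hab)

lemma aux_deriv (k : ℝ) (hk : k ∈ Set.Ioo (0 : ℝ) 1)
    (sn cn dn : ℝ → ℝ)
    (hsn : ∀ x, HasDerivAt sn (cn x * dn x) x)
    (hcn : ∀ x, HasDerivAt cn (-(sn x * dn x)) x)
    (hdn : ∀ x, HasDerivAt dn (-(k ^ 2 * sn x * cn x)) x)
    (hsn0 : sn 0 = 0) (hcn0 : cn 0 = 1) (hdn0 : dn 0 = 1) (x : ℝ) :
    HasDerivAt (kapWidth k sn cn dn)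
      (2 * zetaChar k sn x ^ 2 + (1 - k ^ 2) / 2 - Ecomp k / Kcomp k) x := by
  obtain ⟨h1, h2⟩ := aux_sq k sn cn dn hsn hcn hdn hsn0 hcn0 hdn0 x
  have hdc : Continuous dn := continuous_iff_continuousAt.2 fun x => (hdn x).continuousAt
  have hD : 1 + k * sn x ^ 2 ≠ 0 := by
    have := mul_nonneg hk.1.le (sq_nonneg (sn x)); positivity
  have hZ : HasDerivAt (Zjac k dn) (dn x ^ 2 - Ecomp k / Kcomp k * 1) x :=
    ((hdc.pow 2).integral_hasStrictDerivAt 0 x).hasDerivAt.sub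
      ((hasDerivAt_id x).const_mul (Ecomp k / Kcomp k))
  have hN := (((hsn x).const_mul k).mul (hcn x)).mul (hdn x)
  have hDd := (((hsn x).pow 2).const_mul k).const_add 1
  have := hZ.add (hN.div hDd hD)
  refine HasDerivAt.congr_deriv this ?_
  simp only [Pi.mul_apply, Pi.pow_apply, zetaChar]
  field_simp
  push_cast
  ring_nf
  rw [h1, h2]
  ring

lemma aux_zeta (k : ℝ) (hk : k ∈ Set.Ioo (0 : ℝ) 1) (a b : ℝ) (ha : 0 ≤ a) (hab : a < b)
    (hb : b ≤ 1) :
    0 < ((1 + k) / 2) * (1 - k * b ^ 2) / (1 + k * b ^ 2) ∧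
    ((1 + k) / 2) * (1 - k * b ^ 2) / (1 + k * b ^ 2) <
      ((1 + k) / 2) * (1 - k * a ^ 2) / (1 + k * a ^ 2) := by
  obtain ⟨h0, h1⟩ := hk
  have hb2 : b ^ 2 ≤ 1 := by nlinarith
  have hab2 : a ^ 2 < b ^ 2 := by nlinarith
  have hkb : k * b ^ 2 < 1 := by nlinarith
  have hkab : k * a ^ 2 < k * b ^ 2 := by nlinarith
  have hka : 0 ≤ k * a ^ 2 := by positivity
  constructor
  · have : 0 < 1 - k * b ^ 2 := by linarith
    positivity
  · rw [mul_div_assoc, mul_div_assoc]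
    apply mul_lt_mul_of_pos_left _ (by linarith)
    rw [div_lt_div_iff₀ (by linarith) (by linarith)]
    nlinarith

/-- The inverse width `κ` is differentiable on `(0, K(k))`, has exactly one critical point
`α₀` there, at which `ζ(α₀) = √(E/(2K) − (1−k²)/4)`; `κ` attains its global maximum over
`(0, K(k))` at `α₀`, being strictly increasing on `(0, α₀)` and strictly decreasing
on `(α₀, K(k))`. -/
theorem inverse_width_maximum
    (k : ℝ) (hk : k ∈ Set.Ioo (0 : ℝ) 1)
    (sn cn dn : ℝ → ℝ)
    (hsn : ∀ x, HasDerivAt sn (cn x * dn x) x)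
    (hcn : ∀ x, HasDerivAt cn (-(sn x * dn x)) x)
    (hdn : ∀ x, HasDerivAt dn (-(k ^ 2 * sn x * cn x)) x)
    (hsn0 : sn 0 = 0) (hcn0 : cn 0 = 1) (hdn0 : dn 0 = 1) :
    DifferentiableOn ℝ (kapWidth k sn cn dn) (Set.Ioo 0 (Kcomp k)) ∧
    ∃ α₀ ∈ Set.Ioo 0 (Kcomp k),
      deriv (kapWidth k sn cn dn) α₀ = 0 ∧
      (∀ α ∈ Set.Ioo 0 (Kcomp k), deriv (kapWidth k sn cn dn) α = 0 → α = α₀) ∧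
      zetaChar k sn α₀ = Real.sqrt (Ecomp k / (2 * Kcomp k) - (1 - k ^ 2) / 4) ∧
      (∀ α ∈ Set.Ioo 0 (Kcomp k), kapWidth k sn cn dn α ≤ kapWidth k sn cn dn α₀) ∧
      StrictMonoOn (kapWidth k sn cn dn) (Set.Ioo 0 α₀) ∧
      StrictAntiOn (kapWidth k sn cn dn) (Set.Ioo α₀ (Kcomp k)) := by
  have hD := aux_deriv k hk sn cn dn hsn hcn hdn hsn0 hcn0 hdn0
  obtain ⟨hK, hE1, hE2⟩ := aux_EK k hk
  obtain ⟨hsK, hsm⟩ := aux_sn k hk sn cn dn hsn hcn hdn hsn0 hcn0 hdn0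
  have hkc : Continuous (kapWidth k sn cn dn) :=
    continuous_iff_continuousAt.2 fun x => (hD x).continuousAt
  have hsc : Continuous sn := continuous_iff_continuousAt.2 fun x => (hsn x).continuousAt
  set g : ℝ → ℝ := fun x =>
    2 * zetaChar k sn x ^ 2 + (1 - k ^ 2) / 2 - Ecomp k / Kcomp k with hg
  have h0m : (0 : ℝ) ∈ Set.Icc 0 (Kcomp k) := ⟨le_rfl, hK.le⟩
  have hKm : Kcomp k ∈ Set.Icc 0 (Kcomp k) := ⟨hK.le, le_rfl⟩
  have hz : ∀ a ∈ Set.Icc 0 (Kcomp k), ∀ b ∈ Set.Icc 0 (Kcomp k), a < b →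
      0 < zetaChar k sn b ∧ zetaChar k sn b < zetaChar k sn a := fun a ha b hb hab => by
    refine aux_zeta k hk (sn a) (sn b) ?_ (hsm ha hb hab) ?_
    · rw [← hsn0]; exact hsm.monotoneOn h0m ha ha.1
    · rw [← hsK]; exact hsm.monotoneOn hb hKm hb.2
  have hga : StrictAntiOn g (Set.Icc 0 (Kcomp k)) := fun a ha b hb hab => by
    obtain ⟨h1, h2⟩ := hz a ha b hb hab
    simp only [hg]
    nlinarith
  have hgc : Continuous g := by
    have : Continuous (zetaChar k sn) := by
      unfold zetaChar
      refine Continuous.div (by fun_prop) (by fun_prop) (fun x => ?_)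
      have := mul_nonneg hk.1.le (sq_nonneg (sn x)); positivity
    fun_prop
  have hg0 : 0 < g 0 := by
    simp only [hg, zetaChar, hsn0]
    have : 2 * ((1 + k) / 2 * (1 - k * (0 : ℝ) ^ 2) / (1 + k * (0 : ℝ) ^ 2)) ^ 2 + (1 - k ^ 2) / 2
      = 1 + k := by norm_num; ring
    linarith
  have hgK : g (Kcomp k) < 0 := by
    simp only [hg, zetaChar, hsK]
    have : 2 * ((1 + k) / 2 * (1 - k * (1 : ℝ) ^ 2) / (1 + k * (1 : ℝ) ^ 2)) ^ 2 + (1 - k ^ 2) / 2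
      = 1 - k := by
        have : 1 + k ≠ 0 := by linarith [hk.1]
        norm_num; field_simp; ring
    linarith
  obtain ⟨α, hα, hgα⟩ := intermediate_value_Ioo' hK.le hgc.continuousOn (show (0 : ℝ) ∈ Set.Ioo _ _ from ⟨hgK, hg0⟩)
  have hαm : α ∈ Set.Icc 0 (Kcomp k) := Set.Ioo_subset_Icc_self hα
  have hmono : StrictMonoOn (kapWidth k sn cn dn) (Set.Icc 0 α) := by
    refine strictMonoOn_of_deriv_pos (convex_Icc _ _) hkc.continuousOn (fun x hx => ?_)
    rw [interior_Icc] at hx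
    rw [(hD x).deriv]
    have : g α < g x := hga ⟨hx.1.le, (hx.2.trans hα.2).le⟩ hαm hx.2
    rw [hgα] at this
    exact this
  have hanti : StrictAntiOn (kapWidth k sn cn dn) (Set.Icc α (Kcomp k)) := by
    refine strictAntiOn_of_deriv_neg (convex_Icc _ _) hkc.continuousOn (fun x hx => ?_)
    rw [interior_Icc] at hx
    rw [(hD x).deriv]
    have : g x < g α := hga hαm ⟨(hα.1.trans hx.1).le, hx.2.le⟩ hx.1
    rw [hgα] at this
    exact this
  refine ⟨fun x _ => (hD x).differentiableAt.differentiableWithinAt, α, hα, ?_, ?_, ?_, ?_,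
    hmono.mono Set.Ioo_subset_Icc_self, hanti.mono Set.Ioo_subset_Icc_self⟩
  · rw [(hD α).deriv]; exact hgα
  · intro β hβ h
    rw [(hD β).deriv] at h
    exact hga.injOn (Set.Ioo_subset_Icc_self hβ) hαm (h.trans hgα.symm)
  · have hpos : 0 ≤ zetaChar k sn α := by
      have := hz α hαm _ hKm hα.2
      linarith
    symm
    have e : Ecomp k / (2 * Kcomp k) - (1 - k ^ 2) / 4 = zetaChar k sn α ^ 2 := by
      have h2 : Ecomp k / (2 * Kcomp k) = Ecomp k / Kcomp k / 2 := by
        rw [div_div, mul_comm]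
      rw [h2]
      simp only [hg] at hgα
      linarith
    rw [e, Real.sqrt_sq hpos]
  · intro β hβ
    rcases le_total β α with h | h
    · exact hmono.monotoneOn ⟨hβ.1.le, h⟩ ⟨hα.1.le, le_rfl⟩ h
    · exact hanti.antitoneOn ⟨le_rfl, hα.2.le⟩ ⟨h, hβ.2.le⟩ h

end
end

section
/- Let k ∈ (0,1). For every α ∈ (0, K(k)), the inverse width κ(α) := Z(α;k) + k·sn(α;k)·cn(α;k)·dn(α;k)/(1 + k·sn(α;k)²) is strictly positive. -/
noncomputable section

/-- The inverse width `κ(α) = Z(α;k) + k·sn(α)cn(α)dn(α)/(1 + k·sn²(α))` of the dark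
breather is strictly positive for every `α ∈ (0, K(k))`. -/
theorem inverse_width_positive
    (k : ℝ) (hk : k ∈ Set.Ioo (0 : ℝ) 1)
    (sn cn dn : ℝ → ℝ)
    (hsn : ∀ x, HasDerivAt sn (cn x * dn x) x)
    (hcn : ∀ x, HasDerivAt cn (-(sn x * dn x)) x)
    (hdn : ∀ x, HasDerivAt dn (-(k ^ 2 * sn x * cn x)) x)
    (hsn0 : sn 0 = 0) (hcn0 : cn 0 = 1) (hdn0 : dn 0 = 1) :
    ∀ α ∈ Set.Ioo 0 (Kcomp k),
      0 < Zjac k dn α + k * sn α * cn α * dn α / (1 + k * (sn α) ^ 2) := by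
  obtain ⟨hk0, hk1⟩ := hk
  have hk2 : k ^ 2 < 1 := by nlinarith
  have const : ∀ f : ℝ → ℝ, (∀ x, HasDerivAt f 0 x) → ∀ x, f x = f 0 := fun f hf x =>
    is_const_of_deriv_eq_zero (fun y => (hf y).differentiableAt) (fun y => (hf y).deriv) x 0
  have cdn : Continuous dn := continuous_iff_continuousAt.2 fun x => (hdn x).continuousAt
  have h1 : ∀ x, sn x ^ 2 + cn x ^ 2 = 1 := by
    intro x
    have := const (fun x => sn x ^ 2 + cn x ^ 2) (fun y => by
      refine HasDerivAt.congr_deriv (((hsn y).pow 2).add ((hcn y).pow 2)) ?_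
      push_cast; ring) x
    simpa [hsn0, hcn0] using this
  have h2 : ∀ x, dn x ^ 2 + k ^ 2 * sn x ^ 2 = 1 := by
    intro x
    have := const (fun x => dn x ^ 2 + k ^ 2 * sn x ^ 2) (fun y => by
      refine HasDerivAt.congr_deriv (((hdn y).pow 2).add (((hsn y).pow 2).const_mul (k ^ 2))) ?_
      push_cast; ring) x
    simpa [hsn0, hdn0] using this
  have dpos : ∀ x, 0 < dn x := by
    intro x
    by_contra hx
    obtain ⟨y, hy⟩ := mem_range_of_exists_le_of_exists_ge cdn ⟨x, not_lt.1 hx⟩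
      ⟨0, by rw [hdn0]; exact zero_le_one⟩
    have a := h1 y
    have b := h2 y
    rw [hy] at b
    nlinarith [sq_nonneg (cn y), sq_nonneg (sn y), sq_nonneg k]
  let φ : ℝ → ℝ := fun x => ∫ t in (0 : ℝ)..x, dn t
  have hφ : ∀ x, HasDerivAt φ (dn x) x := fun x =>
    intervalIntegral.integral_hasDerivAt_right (cdn.intervalIntegrable _ _)
      (cdn.stronglyMeasurableAtFilter _ _) cdn.continuousAt
  have φ0 : φ 0 = 0 := by simp [φ]
  have φmono : StrictMono φ := strictMono_of_hasDerivAt_pos hφ dpos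
  have e1 : ∀ x, sn x * Real.cos (φ x) - cn x * Real.sin (φ x) = 0 := by
    intro x
    have := const (fun x => sn x * Real.cos (φ x) - cn x * Real.sin (φ x)) (fun y => by
      refine HasDerivAt.congr_deriv (((hsn y).mul (hφ y).cos).sub ((hcn y).mul (hφ y).sin)) ?_
      ring) x
    simpa [hsn0, φ0] using this
  have e2 : ∀ x, sn x * Real.sin (φ x) + cn x * Real.cos (φ x) = 1 := by
    intro x
    have := const (fun x => sn x * Real.sin (φ x) + cn x * Real.cos (φ x)) (fun y => by
      refine HasDerivAt.congr_deriv (((hsn y).mul (hφ y).sin).add ((hcn y).mul (hφ y).cos)) ?_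
      ring) x
    simpa [hsn0, hcn0, φ0] using this
  have es : ∀ x, sn x = Real.sin (φ x) := by
    intro x
    linear_combination Real.cos (φ x) * e1 x + Real.sin (φ x) * e2 x
      - sn x * Real.sin_sq_add_cos_sq (φ x)
  have ec : ∀ x, cn x = Real.cos (φ x) := by
    intro x
    linear_combination -Real.sin (φ x) * e1 x + Real.cos (φ x) * e2 x
      - cn x * Real.sin_sq_add_cos_sq (φ x)
  have ed : ∀ x, Real.sqrt (1 - k ^ 2 * Real.sin (φ x) ^ 2) = dn x := by
    intro x
    rw [← es, show 1 - k ^ 2 * sn x ^ 2 = dn x ^ 2 by linarith [h2 x], Real.sqrt_sq (dpos x).le]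
  have rpos : ∀ θ, 0 < Real.sqrt (1 - k ^ 2 * Real.sin θ ^ 2) := by
    intro θ
    apply Real.sqrt_pos.2
    nlinarith [Real.sin_sq_le_one θ, sq_nonneg k]
  have cr : Continuous fun θ => Real.sqrt (1 - k ^ 2 * Real.sin θ ^ 2) := by fun_prop
  have cri : Continuous fun θ => (Real.sqrt (1 - k ^ 2 * Real.sin θ ^ 2))⁻¹ :=
    cr.inv₀ fun θ => (rpos θ).ne'
  let F : ℝ → ℝ := fun x => ∫ θ in (0 : ℝ)..x, (Real.sqrt (1 - k ^ 2 * Real.sin θ ^ 2))⁻¹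
  let G : ℝ → ℝ := fun x => ∫ θ in (0 : ℝ)..x, Real.sqrt (1 - k ^ 2 * Real.sin θ ^ 2)
  let A : ℝ → ℝ := fun x => ∫ t in (0 : ℝ)..x, dn t ^ 2
  have hF : ∀ x, HasDerivAt F ((Real.sqrt (1 - k ^ 2 * Real.sin x ^ 2))⁻¹) x := fun x =>
    intervalIntegral.integral_hasDerivAt_right (cri.intervalIntegrable _ _)
      (cri.stronglyMeasurableAtFilter _ _) cri.continuousAt
  have hG : ∀ x, HasDerivAt G (Real.sqrt (1 - k ^ 2 * Real.sin x ^ 2)) x := fun x =>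
    intervalIntegral.integral_hasDerivAt_right (cr.intervalIntegrable _ _)
      (cr.stronglyMeasurableAtFilter _ _) cr.continuousAt
  have cd2 : Continuous fun t => dn t ^ 2 := by fun_prop
  have hA : ∀ x, HasDerivAt A (dn x ^ 2) x := fun x =>
    intervalIntegral.integral_hasDerivAt_right (cd2.intervalIntegrable _ _)
      (cd2.stronglyMeasurableAtFilter _ _) cd2.continuousAt
  have Fmono : StrictMono F := strictMono_of_hasDerivAt_pos hF fun x => inv_pos.2 (rpos x)
  have F0 : F 0 = 0 := by simp [F]
  have G0 : G 0 = 0 := by simp [G]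
  have A0 : A 0 = 0 := by simp [A]
  have Fφ : ∀ x, F (φ x) = x := by
    intro x
    have := const (fun x => F (φ x) - x) (fun y => by
      refine HasDerivAt.congr_deriv (((hF (φ y)).comp y (hφ y)).sub (hasDerivAt_id y)) ?_
      rw [ed, inv_mul_cancel₀ (dpos y).ne', sub_self]) x
    simp only [φ0, F0] at this
    linarith
  have Gφ : ∀ x, G (φ x) = A x := by
    intro x
    have := const (fun x => G (φ x) - A x) (fun y => by
      refine HasDerivAt.congr_deriv (((hG (φ y)).comp y (hφ y)).sub (hA y)) ?_
      rw [ed]; ring) x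
    simp only [φ0, G0, A0] at this
    linarith
  have φK : φ (Kcomp k) = Real.pi / 2 := Fmono.injective (Fφ _)
  have AK : A (Kcomp k) = Ecomp k := by rw [← Gφ, φK]; rfl
  rintro α ⟨hα0, hαK⟩
  have anti : ∀ x y, 0 ≤ x → x ≤ y → y ≤ Kcomp k → dn y ^ 2 ≤ dn x ^ 2 := by
    intro x y hx hxy hy
    have a0 : 0 ≤ φ x := by rw [← φ0]; exact φmono.monotone hx
    have a1 : φ x ≤ φ y := φmono.monotone hxy
    have a2 : φ y ≤ Real.pi / 2 := by rw [← φK]; exact φmono.monotone hy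
    have s0 : 0 ≤ Real.sin (φ x) := Real.sin_nonneg_of_nonneg_of_le_pi a0 (by linarith [Real.pi_pos])
    have s1 : Real.sin (φ x) ≤ Real.sin (φ y) :=
      Real.sin_le_sin_of_le_of_le_pi_div_two (by linarith [Real.pi_pos]) a2 a1
    rw [← es] at s0
    rw [← es, ← es] at s1
    have : k ^ 2 * sn x ^ 2 ≤ k ^ 2 * sn y ^ 2 := by gcongr
    linarith [h2 x, h2 y]
  have i1 : α * dn α ^ 2 ≤ A α := by
    have := intervalIntegral.integral_mono_on (μ := MeasureTheory.volume) hα0.le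
      (f := fun _ => dn α ^ 2) (g := fun t => dn t ^ 2)
      (by simp) (cd2.intervalIntegrable _ _)
      (fun t ht => anti t α ht.1 ht.2 hαK.le)
    simpa using this
  have i2 : A (Kcomp k) - A α ≤ (Kcomp k - α) * dn α ^ 2 := by
    have := intervalIntegral.integral_mono_on (μ := MeasureTheory.volume) hαK.le
      (g := fun _ => dn α ^ 2) (f := fun t => dn t ^ 2)
      (cd2.intervalIntegrable _ _) (by simp)
      (fun t ht => anti α t hα0.le ht.1 ht.2)
    have e : A (Kcomp k) - A α = ∫ t in α..(Kcomp k), dn t ^ 2 :=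
      intervalIntegral.integral_interval_sub_left (cd2.intervalIntegrable _ _)
        (cd2.intervalIntegrable _ _)
    rw [e]
    simpa using this
  rw [AK] at i2
  have Kpos : 0 < Kcomp k := hα0.trans hαK
  have Z0 : 0 ≤ Zjac k dn α := by
    change 0 ≤ A α - Ecomp k / Kcomp k * α
    rw [sub_nonneg, div_mul_eq_mul_div, div_le_iff₀ Kpos]
    nlinarith [mul_le_mul_of_nonneg_left i1 (sub_nonneg.2 hαK.le),
      mul_le_mul_of_nonneg_left i2 hα0.le]
  have b0 : 0 < φ α := by rw [← φ0]; exact φmono hα0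
  have b1 : φ α < Real.pi / 2 := by rw [← φK]; exact φmono hαK
  have sp : 0 < sn α := by
    rw [es]; exact Real.sin_pos_of_pos_of_lt_pi b0 (by linarith [Real.pi_pos])
  have cp : 0 < cn α := by
    rw [ec]; exact Real.cos_pos_of_mem_Ioo ⟨by linarith [Real.pi_pos], b1⟩
  have dp := dpos α
  have : 0 < k * sn α * cn α * dn α / (1 + k * (sn α) ^ 2) := by positivity
  linarith

end
end

section
/- Let k ∈ (0,1) and α ∈ (0, K(k)). Define c₀ := 1 + k² and c := c₀ + 2k(1+k)²·(1 − k·sn(α;k)²)·sn(α;k)·dn(α;k)·cn(α;k) / ( [Z(α;k)·(1 + k·sn(α;k)²) + k·sn(α;k)·dn(α;k)·cn(α;k)]·(1 + k·sn(α;k)²)² ). Then c > c₀; that is, the dark breather propagates faster than the snoidal wave background. -/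
noncomputable section

theorem const_of_deriv_zero {f : ℝ → ℝ} (h : ∀ y, HasDerivAt f 0 y) (x : ℝ) : f x = f 0 :=
  is_const_of_deriv_eq_zero (fun y => (h y).differentiableAt) (fun y => (h y).deriv) x 0

/-- The dark breather propagates faster than the snoidal background: with `c₀ = 1 + k²`,
the breather speed `c` exceeds `c₀` for every `α ∈ (0, K(k))`. -/
theorem breather_speed_exceeds_background
    (k : ℝ) (hk : k ∈ Set.Ioo (0 : ℝ) 1)
    (sn cn dn : ℝ → ℝ)
    (hsn : ∀ x, HasDerivAt sn (cn x * dn x) x)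
    (hcn : ∀ x, HasDerivAt cn (-(sn x * dn x)) x)
    (hdn : ∀ x, HasDerivAt dn (-(k ^ 2 * sn x * cn x)) x)
    (hsn0 : sn 0 = 0) (hcn0 : cn 0 = 1) (hdn0 : dn 0 = 1)
    (α : ℝ) (hα : α ∈ Set.Ioo 0 (Kcomp k)) :
    (1 + k ^ 2) <
      (1 + k ^ 2) +
        2 * k * (1 + k) ^ 2 * (1 - k * (sn α) ^ 2) * sn α * dn α * cn α /
          ((Zjac k dn α * (1 + k * (sn α) ^ 2) + k * sn α * dn α * cn α) *
            (1 + k * (sn α) ^ 2) ^ 2) := by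
  obtain ⟨hk0, hk1⟩ := hk
  obtain ⟨hα0, hαK⟩ := hα
  have csn : Continuous sn := continuous_iff_continuousAt.2 fun x => (hsn x).continuousAt
  have cdn : Continuous dn := continuous_iff_continuousAt.2 fun x => (hdn x).continuousAt
  have hw : ∀ θ : ℝ, 0 < 1 - k ^ 2 * Real.sin θ ^ 2 := by
    intro θ
    nlinarith [Real.sin_sq_le_one θ, sq_nonneg (Real.sin θ), sq_nonneg k]
  -- conserved quantities
  have hd2 : ∀ x, dn x ^ 2 + k ^ 2 * sn x ^ 2 = 1 := by
    intro x
    have := const_of_deriv_zero (f := fun x => dn x ^ 2 + k ^ 2 * sn x ^ 2) (fun y => by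
      refine (((hdn y).pow 2).add (((hsn y).pow 2).const_mul (k ^ 2))).congr_deriv ?_
      simp; ring) x
    simpa [hdn0, hsn0] using this
  have hs2 : ∀ x, sn x ^ 2 + cn x ^ 2 = 1 := by
    intro x
    have := const_of_deriv_zero (f := fun x => sn x ^ 2 + cn x ^ 2) (fun y => by
      refine (((hsn y).pow 2).add ((hcn y).pow 2)).congr_deriv ?_
      simp; ring) x
    simpa [hcn0, hsn0] using this
  have hdne : ∀ x, dn x ≠ 0 := by
    intro x h
    have h1 := hd2 x
    have h2 := hs2 x
    rw [h] at h1
    nlinarith [sq_nonneg (cn x), sq_nonneg (sn x)]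
  have hdpos : ∀ x, 0 < dn x := by
    intro x
    by_contra hx
    have : (0 : ℝ) ∈ Set.range dn :=
      mem_range_of_exists_le_of_exists_ge cdn ⟨x, not_lt.1 hx⟩ ⟨0, by rw [hdn0]; norm_num⟩
    obtain ⟨y, hy⟩ := this
    exact hdne y hy
  -- amplitude
  obtain ⟨am, ham, ham0⟩ : ∃ am : ℝ → ℝ, (∀ x, HasDerivAt am (dn x) x) ∧ am 0 = 0 :=
    ⟨fun x => ∫ t in (0:ℝ)..x, dn t, fun x => cdn.integral_hasStrictDerivAt 0 x |>.hasDerivAt,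
      by simp⟩
  have hsc : ∀ x, sn x = Real.sin (am x) := by
    intro x
    have h := const_of_deriv_zero
      (f := fun x => (sn x - Real.sin (am x)) ^ 2 + (cn x - Real.cos (am x)) ^ 2) (fun y => by
      refine ((((hsn y).sub (ham y).sin).pow 2).add
        (((hcn y).sub (ham y).cos).pow 2)).congr_deriv ?_
      simp; ring) x
    simp only [hsn0, hcn0, ham0, Real.sin_zero, Real.cos_zero] at h
    have : (sn x - Real.sin (am x)) ^ 2 = 0 := by
      nlinarith [sq_nonneg (sn x - Real.sin (am x)), sq_nonneg (cn x - Real.cos (am x))]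
    have := pow_eq_zero_iff (two_ne_zero) |>.1 this
    linarith
  have hcc : ∀ x, cn x = Real.cos (am x) := by
    intro x
    have h := const_of_deriv_zero
      (f := fun x => (sn x - Real.sin (am x)) ^ 2 + (cn x - Real.cos (am x)) ^ 2) (fun y => by
      refine ((((hsn y).sub (ham y).sin).pow 2).add
        (((hcn y).sub (ham y).cos).pow 2)).congr_deriv ?_
      simp; ring) x
    simp only [hsn0, hcn0, ham0, Real.sin_zero, Real.cos_zero] at h
    have : (cn x - Real.cos (am x)) ^ 2 = 0 := by
      nlinarith [sq_nonneg (sn x - Real.sin (am x)), sq_nonneg (cn x - Real.cos (am x))]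
    have := pow_eq_zero_iff (two_ne_zero) |>.1 this
    linarith
  have hds : ∀ x, Real.sqrt (1 - k ^ 2 * Real.sin (am x) ^ 2) = dn x := by
    intro x
    rw [← hsc, show 1 - k ^ 2 * sn x ^ 2 = dn x ^ 2 by linarith [hd2 x]]
    exact Real.sqrt_sq (hdpos x).le
  have cw : Continuous fun θ : ℝ => Real.sqrt (1 - k ^ 2 * Real.sin θ ^ 2) := by fun_prop
  have cwi : Continuous fun θ : ℝ => (Real.sqrt (1 - k ^ 2 * Real.sin θ ^ 2))⁻¹ :=
    cw.inv₀ fun θ => (Real.sqrt_pos.2 (hw θ)).ne'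
  obtain ⟨F, hF, hF0, hFK⟩ : ∃ F : ℝ → ℝ,
      (∀ x, HasDerivAt F ((Real.sqrt (1 - k ^ 2 * Real.sin x ^ 2))⁻¹) x) ∧ F 0 = 0 ∧
        F (Real.pi / 2) = Kcomp k :=
    ⟨fun x => ∫ t in (0:ℝ)..x, (Real.sqrt (1 - k ^ 2 * Real.sin t ^ 2))⁻¹,
      fun x => cwi.integral_hasStrictDerivAt 0 x |>.hasDerivAt, by simp, rfl⟩
  obtain ⟨G, hG, hG0, hGE⟩ : ∃ F : ℝ → ℝ,
      (∀ x, HasDerivAt F (Real.sqrt (1 - k ^ 2 * Real.sin x ^ 2)) x) ∧ F 0 = 0 ∧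
        F (Real.pi / 2) = Ecomp k :=
    ⟨fun x => ∫ t in (0:ℝ)..x, Real.sqrt (1 - k ^ 2 * Real.sin t ^ 2),
      fun x => cw.integral_hasStrictDerivAt 0 x |>.hasDerivAt, by simp, rfl⟩
  have hFmono : StrictMono F := strictMono_of_deriv_pos fun x => by
    rw [(hF x).deriv]; exact inv_pos.2 (Real.sqrt_pos.2 (hw x))
  have hFam : ∀ x, F (am x) = x := by
    intro x
    have := const_of_deriv_zero (f := fun x => F (am x) - x) (fun y => by
      refine (((hF (am y)).comp y (ham y)).sub (hasDerivAt_id y)).congr_deriv ?_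
      rw [hds, inv_mul_cancel₀ (hdne y), sub_self]) x
    simp only [ham0, hF0] at this
    linarith
  have hamK : am (Kcomp k) = Real.pi / 2 := hFmono.injective (by rw [hFam, hFK])
  have hammono : StrictMono am := strictMono_of_deriv_pos fun x => by
    rw [(ham x).deriv]; exact hdpos x
  -- the incomplete integral of the second kind
  obtain ⟨J, hJ, hJ0, hJdef⟩ : ∃ F : ℝ → ℝ,
      (∀ x, HasDerivAt F (dn x ^ 2) x) ∧ F 0 = 0 ∧ F α = ∫ t in (0:ℝ)..α, dn t ^ 2 :=
    ⟨fun x => ∫ t in (0:ℝ)..x, dn t ^ 2,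
      fun x => (cdn.pow 2).integral_hasStrictDerivAt 0 x |>.hasDerivAt, by simp, rfl⟩
  have hGam : ∀ x, G (am x) = J x := by
    intro x
    have := const_of_deriv_zero (f := fun x => G (am x) - J x) (fun y => by
      refine (((hG (am y)).comp y (ham y)).sub (hJ y)).congr_deriv ?_
      rw [hds]; ring) x
    simp only [ham0, hG0, hJ0] at this
    linarith
  have hJK : J (Kcomp k) = Ecomp k := by rw [← hGam, hamK, hGE]
  have hK0 : 0 < Kcomp k := hα0.trans hαK
  have hconc : ConcaveOn ℝ (Set.Icc 0 (Kcomp k)) J := by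
    refine AntitoneOn.concaveOn_of_deriv (convex_Icc _ _)
      (fun x _ => (hJ x).continuousAt.continuousWithinAt)
      (fun x _ => (hJ x).differentiableAt.differentiableWithinAt) ?_
    rw [interior_Icc]
    intro x hx y hy hxy
    rw [(hJ x).deriv, (hJ y).deriv]
    have h0 : 0 < am x := ham0 ▸ hammono hx.1
    have h1 : am y < Real.pi / 2 := hamK ▸ hammono hy.2
    have h2 : am x ≤ am y := hammono.monotone hxy
    have hs : sn x ≤ sn y := by
      rw [hsc, hsc]
      exact Real.sin_le_sin_of_le_of_le_pi_div_two (by linarith) h1.le h2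
    have hs0 : 0 ≤ sn x := by
      rw [hsc]; exact Real.sin_nonneg_of_nonneg_of_le_pi h0.le (by linarith)
    have : sn x ^ 2 ≤ sn y ^ 2 := by gcongr
    nlinarith [hd2 x, hd2 y, mul_le_mul_of_nonneg_left this (sq_nonneg k)]
  have hZ : 0 ≤ Zjac k dn α := by
    have ht : α / Kcomp k ≤ 1 := (div_le_one hK0).2 hαK.le
    have h := hconc.2 (Set.left_mem_Icc.2 hK0.le) (Set.right_mem_Icc.2 hK0.le)
      (sub_nonneg.2 ht) (div_nonneg hα0.le hK0.le) (by ring)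
    simp only [smul_eq_mul, hJ0, mul_zero, zero_add, hJK, div_mul_cancel₀ _ hK0.ne'] at h
    rw [hJdef] at h
    unfold Zjac
    have e : Ecomp k / Kcomp k * α = α / Kcomp k * Ecomp k := by ring
    rw [e]; linarith
  have a0 : 0 < am α := ham0 ▸ hammono hα0
  have a1 : am α < Real.pi / 2 := hamK ▸ hammono hαK
  have hs : 0 < sn α := by
    rw [hsc]; exact Real.sin_pos_of_pos_of_lt_pi a0 (by linarith)
  have hc : 0 < cn α := by
    rw [hcc]; exact Real.cos_pos_of_mem_Ioo ⟨by linarith, a1⟩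
  have hd := hdpos α
  have h1 : 0 < 1 - k * sn α ^ 2 := by nlinarith [hs2 α, sq_nonneg (cn α), sq_nonneg (sn α)]
  have h2 : 0 < Zjac k dn α * (1 + k * (sn α) ^ 2) + k * sn α * dn α * cn α := by positivity
  have : 0 < 2 * k * (1 + k) ^ 2 * (1 - k * (sn α) ^ 2) * sn α * dn α * cn α /
          ((Zjac k dn α * (1 + k * (sn α) ^ 2) + k * sn α * dn α * cn α) *
            (1 + k * (sn α) ^ 2) ^ 2) := by positivity
  linarith

end
end

section
/- Let k ∈ (0,1). The function ζ(α) := ((1+k)/2)·(1 − k·sn(α;k)²)/(1 + k·sn(α;k)²) is strictly decreasing on [0, K(k)], with ζ(0) = (1+k)/2 and ζ(K(k)) = (1−k)/2. Consequently, for every ζ in the spectral gap ((1−k)/2, (1+k)/2) there is a unique α ∈ (0, K(k)) satisfying the characteristic equation ζ = ((1+k)/2)·(1 − k·sn(α;k)²)/(1 + k·sn(α;k)²). -/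
noncomputable section

/-- The characteristic map `α ↦ ζ(α)` is strictly decreasing on `[0, K(k)]`, with
`ζ(0) = (1+k)/2` and `ζ(K(k)) = (1−k)/2`; consequently every `ζ` in the spectral gap
`((1−k)/2, (1+k)/2)` is attained by a unique `α ∈ (0, K(k))`. -/
theorem characteristic_equation_unique_solution
    (k : ℝ) (hk : k ∈ Set.Ioo (0 : ℝ) 1)
    (sn cn dn : ℝ → ℝ)
    (hsn : ∀ x, HasDerivAt sn (cn x * dn x) x)
    (hcn : ∀ x, HasDerivAt cn (-(sn x * dn x)) x)
    (hdn : ∀ x, HasDerivAt dn (-(k ^ 2 * sn x * cn x)) x)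
    (hsn0 : sn 0 = 0) (hcn0 : cn 0 = 1) (hdn0 : dn 0 = 1) :
    StrictAntiOn (zetaChar k sn) (Set.Icc 0 (Kcomp k)) ∧
    zetaChar k sn 0 = (1 + k) / 2 ∧
    zetaChar k sn (Kcomp k) = (1 - k) / 2 ∧
    ∀ ζ ∈ Set.Ioo ((1 - k) / 2) ((1 + k) / 2),
      ∃! α, α ∈ Set.Ioo 0 (Kcomp k) ∧ ζ = zetaChar k sn α := by
  obtain ⟨hk0, hk1⟩ := hk
  have const : ∀ f : ℝ → ℝ, (∀ x, HasDerivAt f 0 x) → ∀ x, f x = f 0 := by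
    intro f hf x
    exact is_const_of_deriv_eq_zero (fun y => (hf y).differentiableAt) (fun y => (hf y).deriv) x 0
  have inv1 : ∀ x, sn x ^ 2 + cn x ^ 2 = 1 := by
    intro x
    have := const (fun x => sn x ^ 2 + cn x ^ 2) (fun y => by
      refine HasDerivAt.congr_deriv (((hsn y).pow 2).add ((hcn y).pow 2)) ?_
      simp only [Nat.cast_ofNat, Nat.add_one_sub_one, pow_one]
      ring) x
    simpa [hsn0, hcn0] using this
  have inv2 : ∀ x, dn x ^ 2 + k ^ 2 * sn x ^ 2 = 1 := by
    intro x
    have := const (fun x => dn x ^ 2 + k ^ 2 * sn x ^ 2) (fun y => by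
      refine HasDerivAt.congr_deriv (((hdn y).pow 2).add (((hsn y).pow 2).const_mul (k ^ 2))) ?_
      simp only [Nat.cast_ofNat, Nat.add_one_sub_one, pow_one]
      ring) x
    simpa [hsn0, hdn0] using this
  have hk2 : k ^ 2 < 1 := by nlinarith
  have dnc : Continuous dn := continuous_iff_continuousAt.2 fun x => (hdn x).continuousAt
  have snc : Continuous sn := continuous_iff_continuousAt.2 fun x => (hsn x).continuousAt
  have dnne : ∀ x, dn x ≠ 0 := by
    intro x h
    have h1 := inv1 x
    have h2 := inv2 x
    rw [h] at h2
    nlinarith [sq_nonneg (cn x), sq_nonneg (sn x), sq_nonneg k]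
  have dnpos : ∀ x, 0 < dn x := by
    intro x
    by_contra hx
    push Not at hx
    obtain ⟨y, hy⟩ := mem_range_of_exists_le_of_exists_ge dnc ⟨x, hx⟩
      ⟨0, by rw [hdn0]; norm_num⟩
    exact dnne y hy
  obtain ⟨A, hA, hA0⟩ : ∃ A : ℝ → ℝ, (∀ x, HasDerivAt A (dn x) x) ∧ A 0 = 0 :=
    ⟨fun x => ∫ t in (0 : ℝ)..x, dn t, fun x => dnc.integral_hasStrictDerivAt 0 x |>.hasDerivAt,
      by simp⟩
  have hg : ∀ x, sn x * Real.cos (A x) - cn x * Real.sin (A x) = 0 := by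
    intro x
    have := const (fun x => sn x * Real.cos (A x) - cn x * Real.sin (A x)) (fun y => by
      refine HasDerivAt.congr_deriv (((hsn y).mul (hA y).cos).sub ((hcn y).mul (hA y).sin)) ?_
      ring) x
    simpa [hsn0, hA0] using this
  have hh : ∀ x, cn x * Real.cos (A x) + sn x * Real.sin (A x) = 1 := by
    intro x
    have := const (fun x => cn x * Real.cos (A x) + sn x * Real.sin (A x)) (fun y => by
      refine HasDerivAt.congr_deriv (((hcn y).mul (hA y).cos).add ((hsn y).mul (hA y).sin)) ?_
      ring) x
    simpa [hsn0, hcn0, hA0] using this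
  have hs : ∀ x, sn x = Real.sin (A x) := by
    intro x
    linear_combination Real.cos (A x) * hg x + Real.sin (A x) * hh x
      - sn x * Real.sin_sq_add_cos_sq (A x)
  have rad : ∀ t : ℝ, 0 < 1 - k ^ 2 * Real.sin t ^ 2 := by
    intro t
    nlinarith [Real.sin_sq_le_one t, sq_nonneg k, sq_nonneg (Real.sin t)]
  have fc : Continuous fun t : ℝ => (Real.sqrt (1 - k ^ 2 * Real.sin t ^ 2))⁻¹ := by
    apply Continuous.inv₀ (by fun_prop)
    intro t
    exact (Real.sqrt_pos.2 (rad t)).ne'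
  obtain ⟨F, hF, hF0, hFK⟩ : ∃ F : ℝ → ℝ,
      (∀ x, HasDerivAt F ((Real.sqrt (1 - k ^ 2 * Real.sin x ^ 2))⁻¹) x) ∧ F 0 = 0 ∧
      F (Real.pi / 2) = Kcomp k :=
    ⟨fun x => ∫ t in (0 : ℝ)..x, (Real.sqrt (1 - k ^ 2 * Real.sin t ^ 2))⁻¹,
      fun x => fc.integral_hasStrictDerivAt 0 x |>.hasDerivAt, by simp, rfl⟩
  have Fmono : StrictMono F := strictMono_of_hasDerivAt_pos hF
    (fun x => inv_pos.2 (Real.sqrt_pos.2 (rad x)))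
  have Amono : StrictMono A := strictMono_of_hasDerivAt_pos hA dnpos
  have hFA : ∀ x, F (A x) = x := by
    intro x
    have := const (fun x => F (A x) - x) (fun y => by
      refine HasDerivAt.congr_deriv (((hF (A y)).comp y (hA y)).sub (hasDerivAt_id y)) ?_
      have : Real.sqrt (1 - k ^ 2 * Real.sin (A y) ^ 2) = dn y := by
        rw [← hs, show 1 - k ^ 2 * sn y ^ 2 = dn y ^ 2 by linarith [inv2 y],
          Real.sqrt_sq (dnpos y).le]
      rw [this, inv_mul_cancel₀ (dnne y), sub_self]) x
    simp only [hA0, hF0] at this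
    linarith
  have AK : A (Kcomp k) = Real.pi / 2 := Fmono.injective (by rw [hFA, hFK])
  have Kpos : 0 < Kcomp k := by
    rw [← Amono.lt_iff_lt, AK, hA0]
    positivity
  have snK : sn (Kcomp k) = 1 := by rw [hs, AK, Real.sin_pi_div_two]
  have den : ∀ x, 0 < 1 + k * sn x ^ 2 := fun x => by positivity
  have anti : StrictAntiOn (zetaChar k sn) (Set.Icc 0 (Kcomp k)) := by
    intro x hx y hy hxy
    have ax : 0 ≤ A x := by rw [← hA0]; exact Amono.monotone hx.1
    have ay : A y ≤ Real.pi / 2 := by rw [← AK]; exact Amono.monotone hy.2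
    have axy := Amono hxy
    have sx : 0 ≤ sn x := by
      rw [hs]
      exact Real.sin_nonneg_of_nonneg_of_le_pi ax (by linarith [Real.pi_pos])
    have sxy : sn x < sn y := by
      rw [hs, hs]
      exact Real.sin_lt_sin_of_lt_of_le_pi_div_two (by linarith [Real.pi_pos]) ay axy
    have sq : sn x ^ 2 < sn y ^ 2 := by nlinarith
    unfold zetaChar
    rw [div_lt_div_iff₀ (den y) (den x)]
    have : 0 < (1 + k) * k * (sn y ^ 2 - sn x ^ 2) := by
      have := sub_pos.2 sq
      positivity
    linarith
  have z0 : zetaChar k sn 0 = (1 + k) / 2 := by simp [zetaChar, hsn0]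
  have zK : zetaChar k sn (Kcomp k) = (1 - k) / 2 := by
    have : 1 + k ≠ 0 := by positivity
    simp only [zetaChar, snK]
    field_simp
    try ring
  refine ⟨anti, z0, zK, ?_⟩
  intro ζ hζ
  have zc : Continuous (zetaChar k sn) := by
    unfold zetaChar
    exact Continuous.div (by fun_prop) (by fun_prop) fun x => (den x).ne'
  obtain ⟨α, hα, hζα⟩ := intermediate_value_Ioo' Kpos.le zc.continuousOn
    (by rw [z0, zK]; exact hζ)
  refine ⟨α, ⟨hα, hζα.symm⟩, ?_⟩
  rintro β ⟨hβ, hζβ⟩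
  exact anti.injOn (Set.Ioo_subset_Icc_self hβ) (Set.Ioo_subset_Icc_self hα)
    (by rw [← hζβ, hζα])

end
end

section
/- Let k ∈ ℝ and let s, c, d be real numbers with c² = 1 − s², d² = 1 − k²s², and 1 + ks² ≠ 0. Define ζ := ((1+k)/2)·(1 − ks²)/(1 + ks²) and ω := −2k(1+k)²·(1 − ks²)·s·c·d/(1 + ks²)³. Then ω² = −16ζ²·(ζ⁴ − (1/2)(1+k²)ζ² + (1/16)(1−k²)²). -/
/-- The temporal exponent `ω = −2k(1+k)²(1−ks²)·s·c·d/(1+ks²)³` of the dark-breather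
eigenfunctions is a square root of `−16ζ²P(ζ)`, where
`ζ = ((1+k)/2)(1−ks²)/(1+ks²)` and `P(ζ) = ζ⁴ − (1+k²)ζ²/2 + (1−k²)²/16`,
given the fundamental relations `c² = 1 − s²` and `d² = 1 − k²s²`. -/
theorem omega_squared_identity
    (k s c d : ℝ)
    (hc : c ^ 2 = 1 - s ^ 2) (hd : d ^ 2 = 1 - k ^ 2 * s ^ 2)
    (hne : 1 + k * s ^ 2 ≠ 0) :
    (-(2 * k * (1 + k) ^ 2 * (1 - k * s ^ 2) * s * c * d / (1 + k * s ^ 2) ^ 3)) ^ 2 =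
      -(16 * (((1 + k) / 2) * (1 - k * s ^ 2) / (1 + k * s ^ 2)) ^ 2 *
        ((((1 + k) / 2) * (1 - k * s ^ 2) / (1 + k * s ^ 2)) ^ 4
          - (1 / 2) * (1 + k ^ 2) * (((1 + k) / 2) * (1 - k * s ^ 2) / (1 + k * s ^ 2)) ^ 2
          + (1 / 16) * (1 - k ^ 2) ^ 2)) := by
  have h1 : (-(2 * k * (1 + k) ^ 2 * (1 - k * s ^ 2) * s * c * d / (1 + k * s ^ 2) ^ 3)) ^ 2 =
      4 * k ^ 2 * (1 + k) ^ 4 * (1 - k * s ^ 2) ^ 2 * s ^ 2 * (c ^ 2) * (d ^ 2)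
        / (1 + k * s ^ 2) ^ 6 := by
    field_simp
    ring
  rw [h1, hc, hd]
  field_simp
  ring
end

section
/- Let q ∈ (0,1) and set τ := −(ln q)/π > 0, so that q = e^{−πτ}. Extend θ₁(·;q) and θ₄(·;q) to complex arguments by their defining series. Then for every y ∈ ℝ: (θ₁(y + iπτ/4; q)² + θ₄(y + iπτ/4; q)²)·θ₄(iπτ/4; q)² = i·q^{−1/4}·e^{−iy}·θ₁(y;q)·θ₄(y;q)·θ₄(0;q)². -/
noncomputable section

/-- The Jacobi theta function `θ₁(y;q) = 2·Σ_{n≥1} (−1)^{n−1} q^{(n−1/2)²} sin((2n−1)y)`,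
extended to complex arguments (the sum below runs over `n : ℕ`, representing the
index `n + 1 ≥ 1`). -/
def cTheta1 (q : ℝ) (y : ℂ) : ℂ :=
  2 * ∑' n : ℕ, (-1 : ℂ) ^ n * ((q ^ (((n : ℝ) + 1 / 2) ^ 2) : ℝ) : ℂ) *
    Complex.sin ((2 * (n : ℂ) + 1) * y)

/-- The Jacobi theta function `θ₄(y;q) = 1 + 2·Σ_{n≥1} (−1)ⁿ q^{n²} cos(2ny)`,
extended to complex arguments (the sum below runs over `n : ℕ`, representing the
index `n + 1 ≥ 1`). -/
def cTheta4 (q : ℝ) (y : ℂ) : ℂ :=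
  1 + 2 * ∑' n : ℕ, (-1 : ℂ) ^ (n + 1) * (q : ℂ) ^ ((n + 1) ^ 2) *
    Complex.cos (2 * ((n : ℂ) + 1) * y)

def qpT (t : ℝ) (u : ℂ) : ℂ := ∑' n : ℤ, Complex.exp (-t * (n : ℂ) ^ 2 + u * n)

def qpO (t : ℝ) (u : ℂ) : ℂ :=
  ∑' n : ℤ, Complex.exp (-t * ((n : ℂ) + 1 / 2) ^ 2 + u * (n + 1 / 2))

lemma qp_summable_T {t : ℝ} (ht : 0 < t) (u : ℂ) :
    Summable fun n : ℤ => Complex.exp (-t * (n : ℂ) ^ 2 + u * n) := by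
  have hpi : (Real.pi : ℂ) ≠ 0 := by exact_mod_cast Real.pi_ne_zero
  have h := (summable_jacobiTheta₂_term_iff (u / (2 * Real.pi * Complex.I))
    (((t / Real.pi : ℝ) : ℂ) * Complex.I)).2 (by simp; positivity)
  refine h.congr fun n => ?_
  unfold jacobiTheta₂_term
  congr 1
  push_cast
  field_simp
  linear_combination ((t : ℂ) * n ^ 2) * Complex.I_sq

lemma qp_O_term (t : ℝ) (u : ℂ) (n : ℤ) :
    Complex.exp (-t * ((n : ℂ) + 1 / 2) ^ 2 + u * (n + 1 / 2)) =
      Complex.exp (u / 2 - t / 4) * Complex.exp (-t * (n : ℂ) ^ 2 + (u - t) * n) := by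
  rw [← Complex.exp_add]; congr 1; ring

lemma qp_summable_O {t : ℝ} (ht : 0 < t) (u : ℂ) :
    Summable fun n : ℤ => Complex.exp (-t * ((n : ℂ) + 1 / 2) ^ 2 + u * (n + 1 / 2)) := by
  simp_rw [qp_O_term]
  exact (qp_summable_T ht _).mul_left _

lemma qpO_eq (t : ℝ) (u : ℂ) :
    qpO t u = Complex.exp (u / 2 - t / 4) * qpT t (u - t) := by
  unfold qpO qpT
  simp_rw [qp_O_term]
  exact tsum_mul_left

lemma qpT_eq (t : ℝ) (u : ℂ) :
    qpT t u = Complex.exp (u / 2 - t / 4) * qpO t (u - t) := by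
  unfold qpO qpT
  rw [← (Equiv.addRight (1 : ℤ)).tsum_eq, ← tsum_mul_left]
  refine tsum_congr fun n => ?_
  rw [← Complex.exp_add]; congr 1
  simp only [Equiv.coe_addRight]
  push_cast; ring

/-- parity splitting of pairs -/
def qpPair : (ℤ × ℤ) ⊕ (ℤ × ℤ) ≃ ℤ × ℤ :=
  Equiv.ofBijective
    (Sum.elim (fun p => (p.1 + p.2, p.1 - p.2)) (fun p => (p.1 + p.2 + 1, p.1 - p.2))) (by
    constructor
    · rintro (⟨a, b⟩ | ⟨a, b⟩) (⟨c, d⟩ | ⟨c, d⟩) h <;>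
        simp only [Sum.elim_inl, Sum.elim_inr, Prod.mk.injEq] at h
      · have h1 : a = c := by omega
        have h2 : b = d := by omega
        rw [h1, h2]
      · omega
      · omega
      · have h1 : a = c := by omega
        have h2 : b = d := by omega
        rw [h1, h2]
    · rintro ⟨m, n⟩
      rcases Int.even_or_odd' (m + n) with ⟨a, ha | ha⟩
      · refine ⟨Sum.inl (a, m - a), ?_⟩
        simp only [Sum.elim_inl, Prod.mk.injEq]
        omega
      · refine ⟨Sum.inr (a, m - a - 1), ?_⟩
        simp only [Sum.elim_inr, Prod.mk.injEq]
        omega)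

/-- parity splitting of integers -/
def qpSing : ℤ ⊕ ℤ ≃ ℤ :=
  Equiv.ofBijective (Sum.elim (fun p => 2 * p) (fun p => 2 * p + 1)) (by
    constructor
    · rintro (a | a) (c | c) h <;>
        simp only [Sum.elim_inl, Sum.elim_inr] at h
      · rw [show a = c by omega]
      · omega
      · omega
      · rw [show a = c by omega]
    · intro m
      rcases Int.even_or_odd' m with ⟨a, ha | ha⟩
      · exact ⟨Sum.inl a, ha.symm⟩
      · exact ⟨Sum.inr a, ha.symm⟩)

lemma qpSing_inl (a : ℤ) : qpSing (Sum.inl a) = 2 * a := rfl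
lemma qpSing_inr (a : ℤ) : qpSing (Sum.inr a) = 2 * a + 1 := rfl
lemma qpPair_inl (p : ℤ × ℤ) : qpPair (Sum.inl p) = (p.1 + p.2, p.1 - p.2) := rfl
lemma qpPair_inr (p : ℤ × ℤ) : qpPair (Sum.inr p) = (p.1 + p.2 + 1, p.1 - p.2) := rfl

lemma qp_tsum_a {f : ℤ → ℂ} (hS : Summable f) :
    ∑' n, f n = f 0 + ∑' n : ℕ, (f ((n : ℤ) + 1) + f (-((n : ℤ) + 1))) := by
  have ha : Summable fun n : ℕ => f ((n : ℤ) + 1) :=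
    hS.comp_injective (i := fun n : ℕ => (n : ℤ) + 1) (fun a b h => by simp only at h; omega)
  have hb : Summable fun n : ℕ => f (-((n : ℤ) + 1)) :=
    hS.comp_injective (i := fun n : ℕ => -((n : ℤ) + 1)) (fun a b h => by simp only at h; omega)
  rw [tsum_of_add_one_of_neg_add_one ha hb, ha.tsum_add hb]
  ring

lemma qp_tsum_b {f : ℤ → ℂ} (hS : Summable f) :
    ∑' n, f n = ∑' n : ℕ, (f (n : ℤ) + f (-((n : ℤ) + 1))) := by
  have ha : Summable fun n : ℕ => f (n : ℤ) :=
    hS.comp_injective (i := fun n : ℕ => (n : ℤ)) (fun a b h => by simp only at h; omega)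
  have hb : Summable fun n : ℕ => f (-((n : ℤ) + 1)) :=
    hS.comp_injective (i := fun n : ℕ => -((n : ℤ) + 1)) (fun a b h => by simp only at h; omega)
  rw [tsum_of_nat_of_neg_add_one ha hb, ha.tsum_add hb]

lemma qpT_split {t s : ℝ} (ht : 0 < t) (hs : s = 4 * t) (u v : ℂ) (hv : v = 2 * u) :
    qpT t u = qpT s v + qpO s v := by
  subst hs hv
  have h4 : 0 < 4 * t := by linarith
  have h1 := (qp_summable_T h4 (2 * u)).hasSum
  have h2 := (qp_summable_O h4 (2 * u)).hasSum
  unfold qpT qpO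
  rw [← qpSing.tsum_eq (fun n : ℤ => Complex.exp (-t * (n : ℂ) ^ 2 + u * n))]
  refine (HasSum.sum ?_ ?_).tsum_eq
  · convert h1 using 2 with n
    simp only [Function.comp, qpSing_inl]
    congr 1; push_cast; ring
  · convert h2 using 2 with n
    simp only [Function.comp, qpSing_inr]
    congr 1; push_cast; ring

lemma qpTT {t s : ℝ} (ht : 0 < t) (hs : s = 2 * t) (u v : ℂ) :
    qpT t u * qpT t v = qpT s (u + v) * qpT s (u - v) + qpO s (u + v) * qpO s (u - v) := by
  subst hs
  have h2 : 0 < 2 * t := by linarith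
  unfold qpT qpO
  rw [tsum_mul_tsum_of_summable_norm (qp_summable_T ht u).norm (qp_summable_T ht v).norm,
    tsum_mul_tsum_of_summable_norm (qp_summable_T h2 _).norm (qp_summable_T h2 _).norm,
    tsum_mul_tsum_of_summable_norm (qp_summable_O h2 _).norm (qp_summable_O h2 _).norm]
  have e1 := (summable_mul_of_summable_norm (qp_summable_T h2 (u + v)).norm
    (qp_summable_T h2 (u - v)).norm).hasSum
  have e2 := (summable_mul_of_summable_norm (qp_summable_O h2 (u + v)).norm
    (qp_summable_O h2 (u - v)).norm).hasSum
  rw [← qpPair.tsum_eq]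
  refine (HasSum.sum ?_ ?_).tsum_eq
  · convert e1 using 2 with n
    simp only [Function.comp, qpPair_inl]
    rw [← Complex.exp_add, ← Complex.exp_add]
    congr 1; push_cast; ring
  · convert e2 using 2 with n
    simp only [Function.comp, qpPair_inr]
    rw [← Complex.exp_add, ← Complex.exp_add]
    congr 1; push_cast; ring

lemma qpOO {t s : ℝ} (ht : 0 < t) (hs : s = 2 * t) (u v : ℂ) :
    qpO t u * qpO t v = qpO s (u + v) * qpT s (u - v) + qpT s (u + v) * qpO s (u - v) := by
  rw [qpO_eq t u, qpO_eq t v, qpO_eq s (u + v), qpT_eq s (u + v)]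
  have := qpTT ht hs (u - t) (v - t)
  rw [show u - t + (v - t) = u + v - (s : ℂ) by rw [hs]; push_cast; ring,
    show u - t - (v - t) = u - v by ring] at this
  have e : Complex.exp ((u + v) / 2 - s / 4) =
      Complex.exp (u / 2 - t / 4) * Complex.exp (v / 2 - t / 4) := by
    rw [← Complex.exp_add, hs]; congr 1; push_cast; ring
  rw [e]
  linear_combination Complex.exp (u / 2 - t / 4) * Complex.exp (v / 2 - t / 4) * this

lemma qp_sq_add {t s : ℝ} (ht : 0 < t) (hs : s = t / 2) (u : ℂ) :
    qpT t u ^ 2 + qpO t u ^ 2 = qpT s u * qpT s 0 := by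
  have hs0 : 0 < s := by linarith
  have h1 := qpTT ht rfl u u
  have h2 := qpOO ht rfl u u
  rw [qpT_split hs0 (s := 2 * t) (by linarith) u (u + u) (by ring),
    qpT_split hs0 (s := 2 * t) (by linarith) 0 (u - u) (by ring)]
  linear_combination h1 + h2

lemma qp_mul {t s : ℝ} (ht : 0 < t) (hs : s = t / 2) (u : ℂ) :
    2 * (qpT t u * qpO t u) = qpO s u * qpO s 0 := by
  have h1 := qp_sq_add ht hs u
  have h2 := qpTT (t := t / 4) (by linarith) (s := s) (by linarith) (u / 2) (u / 2)
  rw [qpT_split (t := t / 4) (by linarith) (s := t) (by linarith) (u / 2) u (by ring),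
    sub_self, add_halves] at h2
  linear_combination h2 - h1

lemma qpT_period (t : ℝ) (u : ℂ) : qpT t (u + 2 * Real.pi * Complex.I) = qpT t u := by
  unfold qpT
  refine tsum_congr fun n => ?_
  rw [show -(t : ℂ) * (n : ℂ) ^ 2 + (u + 2 * Real.pi * Complex.I) * n =
    (-t * (n : ℂ) ^ 2 + u * n) + n * (2 * Real.pi * Complex.I) by ring,
    Complex.exp_add, Complex.exp_int_mul_two_pi_mul_I, mul_one]

lemma qpO_period (t : ℝ) (u : ℂ) : qpO t (u + 2 * Real.pi * Complex.I) = - qpO t u := by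
  rw [qpO_eq, qpO_eq, show u + 2 * Real.pi * Complex.I - (t : ℂ) =
    u - t + 2 * Real.pi * Complex.I by ring, qpT_period,
    show (u + 2 * Real.pi * Complex.I) / 2 - (t : ℂ) / 4 =
      (u / 2 - t / 4) + Real.pi * Complex.I by ring, Complex.exp_add, Complex.exp_pi_mul_I]
  ring

lemma qp_reflect (t s : ℝ) (hs : s = 2 * t) : qpO s (-t) = qpT s (-t) := by
  subst hs
  unfold qpO qpT
  rw [← (Equiv.subLeft (-1 : ℤ)).tsum_eq (fun n : ℤ =>
    Complex.exp (-((2 * t : ℝ) : ℂ) * ((n : ℂ) + 1 / 2) ^ 2 + (-(t : ℂ)) * (n + 1 / 2)))]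
  refine tsum_congr fun n => ?_
  simp only [Equiv.subLeft_apply]
  congr 1; push_cast; ring

lemma cTheta4_eq {q : ℝ} (h0 : 0 < q) (h1 : q < 1) (x : ℂ) :
    cTheta4 q x = qpT (-Real.log q) (2 * Complex.I * x + Real.pi * Complex.I) := by
  have ht : 0 < -Real.log q := by linarith [Real.log_neg h0 h1]
  have hS := qp_summable_T ht (2 * Complex.I * x + Real.pi * Complex.I)
  have hqe : (q : ℂ) = Complex.exp (Real.log q) := by
    rw [← Complex.ofReal_exp, Real.exp_log h0]
  unfold cTheta4 qpT
  rw [qp_tsum_a hS, ← tsum_mul_left]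
  congr 1
  · simp
  · refine tsum_congr fun n => ?_
    have e : ∀ k : ℤ, Complex.exp (-((-Real.log q : ℝ) : ℂ) * (k : ℂ) ^ 2
        + (2 * Complex.I * x + Real.pi * Complex.I) * k) =
        (-1) ^ k * Complex.exp (Real.log q * (k : ℂ) ^ 2) * Complex.exp (2 * k * x * Complex.I) := by
      intro k
      rw [← Complex.exp_pi_mul_I, ← Complex.exp_int_mul, ← Complex.exp_add, ← Complex.exp_add]
      congr 1; push_cast; ring
    have e2 : ((-1 : ℂ)) ^ (-((n : ℤ) + 1)) = (-1) ^ (n + 1) := by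
      rw [zpow_neg, ← inv_zpow, show ((-1 : ℂ))⁻¹ = -1 by norm_num]; norm_cast
    have e3 : ((-1 : ℂ)) ^ (((n : ℤ) + 1)) = (-1) ^ (n + 1) := by norm_cast
    rw [e, e, e2, e3, hqe, ← Complex.exp_nat_mul]
    have c := Complex.two_cos (2 * ((n : ℂ) + 1) * x)
    rw [show ((((n + 1) ^ 2 : ℕ) : ℂ) * (Real.log q : ℂ)) = Real.log q * ((n : ℂ) + 1) ^ 2 by
      push_cast; ring]
    push_cast
    rw [neg_sq, show 2 * -((n : ℂ) + 1) * x * Complex.I = -(2 * ((n : ℂ) + 1) * x) * Complex.I by ring]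
    linear_combination (-1) ^ (n + 1) * Complex.exp (Real.log q * ((n : ℂ) + 1) ^ 2) * c

lemma cTheta1_eq {q : ℝ} (h0 : 0 < q) (h1 : q < 1) (x : ℂ) :
    cTheta1 q x = -qpO (-Real.log q) (2 * Complex.I * x + Real.pi * Complex.I) := by
  have ht : 0 < -Real.log q := by linarith [Real.log_neg h0 h1]
  have hS := qp_summable_O ht (2 * Complex.I * x + Real.pi * Complex.I)
  unfold cTheta1 qpO
  rw [qp_tsum_b hS, ← tsum_mul_left, ← tsum_neg]
  refine tsum_congr fun n => ?_
  have eq : ((q ^ (((n : ℝ) + 1 / 2) ^ 2) : ℝ) : ℂ) =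
      Complex.exp (Real.log q * ((n : ℂ) + 1 / 2) ^ 2) := by
    rw [Real.rpow_def_of_pos h0]; push_cast; rfl
  have hI : (-1 : ℂ) ^ n * Complex.I =
      Complex.exp (n * (Real.pi * Complex.I) + Real.pi / 2 * Complex.I) := by
    rw [Complex.exp_add, Complex.exp_nat_mul, Complex.exp_pi_mul_I, Complex.exp_pi_div_two_mul_I]
  have hI2 : -((-1 : ℂ) ^ n * Complex.I) =
      Complex.exp (-(n * (Real.pi * Complex.I) + Real.pi / 2 * Complex.I)) := by
    rw [Complex.exp_neg, ← hI, mul_inv, Complex.inv_I, ← inv_pow,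
      show ((-1 : ℂ))⁻¹ = -1 by norm_num]
    ring
  have ea : Complex.exp (-((-Real.log q : ℝ) : ℂ) * (((n : ℤ) : ℂ) + 1 / 2) ^ 2
        + (2 * Complex.I * x + Real.pi * Complex.I) * (((n : ℤ) : ℂ) + 1 / 2)) =
        (-1) ^ n * Complex.I * Complex.exp (Real.log q * ((n : ℂ) + 1 / 2) ^ 2)
          * Complex.exp ((2 * n + 1) * x * Complex.I) := by
    rw [hI, ← Complex.exp_add, ← Complex.exp_add]
    congr 1; push_cast; ring
  have eb : Complex.exp (-((-Real.log q : ℝ) : ℂ) * (((-((n : ℤ) + 1) : ℤ) : ℂ) + 1 / 2) ^ 2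
        + (2 * Complex.I * x + Real.pi * Complex.I) * (((-((n : ℤ) + 1) : ℤ) : ℂ) + 1 / 2)) =
        -((-1) ^ n * Complex.I) * Complex.exp (Real.log q * ((n : ℂ) + 1 / 2) ^ 2)
          * Complex.exp (-((2 * n + 1) * x) * Complex.I) := by
    rw [hI2, ← Complex.exp_add, ← Complex.exp_add]
    congr 1; push_cast; ring
  rw [ea, eb, eq]
  have c := Complex.two_sin ((2 * (n : ℂ) + 1) * x)
  linear_combination (-1) ^ n * Complex.exp (Real.log q * ((n : ℂ) + 1 / 2) ^ 2) * c

/-- The squared quarter-period translation identity for the Jacobi theta functions: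
for `q = e^{−πτ} ∈ (0,1)` and every real `y`,
`(θ₁(y + iπτ/4)² + θ₄(y + iπτ/4)²)·θ₄(iπτ/4)² = i·q^{−1/4}·e^{−iy}·θ₁(y)·θ₄(y)·θ₄(0)²`. -/
theorem theta_quarter_period_identity
    (q : ℝ) (hq : q ∈ Set.Ioo (0 : ℝ) 1) (τ : ℝ) (hτ : τ = -(Real.log q) / Real.pi) :
    ∀ y : ℝ,
      (cTheta1 q ((y : ℂ) + Complex.I * Real.pi * τ / 4) ^ 2
        + cTheta4 q ((y : ℂ) + Complex.I * Real.pi * τ / 4) ^ 2)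
        * cTheta4 q (Complex.I * Real.pi * τ / 4) ^ 2
      = Complex.I * ((q ^ (-(1 / 4 : ℝ)) : ℝ) : ℂ) * Complex.exp (-(Complex.I * y))
          * cTheta1 q y * cTheta4 q y * cTheta4 q 0 ^ 2 := by
  intro y
  obtain ⟨h0, h1⟩ := hq
  simp only [cTheta4_eq h0 h1, cTheta1_eq h0 h1]
  have hq4 : ((q ^ (-(1 / 4 : ℝ)) : ℝ) : ℂ) = Complex.exp (((-Real.log q : ℝ) : ℂ) / 4) := by
    rw [Real.rpow_def_of_pos h0]; push_cast; congr 1; ring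
  rw [hq4]
  have ht : 0 < -Real.log q := by linarith [Real.log_neg h0 h1]
  have hτ' : (Real.pi : ℂ) * τ = ((-Real.log q : ℝ) : ℂ) := by
    rw [hτ, ← Complex.ofReal_mul]; congr 1; field_simp
  generalize -Real.log q = t at *
  have I2 := Complex.I_sq
  obtain ⟨V, hV⟩ : ∃ V : ℂ, V = 2 * Complex.I * y + Real.pi * Complex.I := ⟨_, rfl⟩
  have a1 : 2 * Complex.I * ((y : ℂ) + Complex.I * Real.pi * τ / 4) + Real.pi * Complex.I
      = V - (t / 2 : ℝ) := by
    push_cast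
    linear_combination -hV - hτ' / 2 + Real.pi * τ / 2 * I2
  have a2 : 2 * Complex.I * (Complex.I * Real.pi * τ / 4) + Real.pi * Complex.I
      = Real.pi * Complex.I - (t / 2 : ℝ) := by
    push_cast
    linear_combination - hτ' / 2 + Real.pi * τ / 2 * I2
  rw [a1, a2, ← hV, mul_zero, zero_add]
  have ht2 : 0 < t / 2 := by linarith
  have b1 := qp_sq_add ht rfl (V - (t / 2 : ℝ))
  have b2 := qp_mul ht rfl V
  have b3 := qpO_eq (t / 2) V
  -- constants
  have c1 := qpTT ht rfl (Real.pi * Complex.I - (t / 2 : ℝ)) (Real.pi * Complex.I - (t / 2 : ℝ))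
  have c2 := qpTT ht rfl (Real.pi * Complex.I) (Real.pi * Complex.I)
  rw [show (Real.pi * Complex.I - (t / 2 : ℝ)) + (Real.pi * Complex.I - (t / 2 : ℝ))
    = -(t : ℂ) + 2 * Real.pi * Complex.I by push_cast; ring, sub_self, qpT_period, qpO_period,
    qp_reflect t _ rfl] at c1
  rw [show (Real.pi * Complex.I) + (Real.pi * Complex.I)
    = (0 : ℂ) + 2 * Real.pi * Complex.I by ring, sub_self, qpT_period, qpO_period] at c2
  have d1 := qpT_split ht2 (s := 2 * t) (by ring) (-(t / 2 : ℝ)) (-(t : ℂ)) (by push_cast; ring)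
  rw [qp_reflect t _ rfl] at d1
  have d2 := qpT_split ht2 (s := 2 * t) (by ring) 0 0 (by ring)
  have d3 := qpO_eq (t / 2) 0
  rw [zero_sub] at d3
  have e1 : Complex.exp (V / 2 - (t / 2 : ℝ) / 4) * (Complex.I * Complex.exp (t / 4) *
      Complex.exp (-(Complex.I * y))) = - Complex.exp (t / 8) := by
    have : Complex.exp (V / 2 - (t / 2 : ℝ) / 4) =
      Complex.exp (Complex.I * y) * Complex.I * Complex.exp (-t / 8) := by
      have hI : Complex.exp (Complex.I * y) * Complex.I =
          Complex.exp (Complex.I * y) * Complex.exp (Real.pi / 2 * Complex.I) := by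
        rw [Complex.exp_pi_div_two_mul_I]
      rw [hI, ← Complex.exp_add, ← Complex.exp_add, hV]
      congr 1; push_cast; ring
    rw [this]
    have f1 : Complex.exp (Complex.I * y) * Complex.exp (-(Complex.I * y)) = 1 := by
      rw [← Complex.exp_add]; simp
    have f2 : Complex.exp (-t / 8) * Complex.exp (t / 4) = Complex.exp ((t : ℂ) / 8) := by
      rw [← Complex.exp_add]; congr 1; ring
    linear_combination Complex.I ^ 2 * Complex.exp (-t / 8) * Complex.exp (t / 4) * f1
      + Complex.I ^ 2 * f2 + Complex.exp ((t : ℂ) / 8) * I2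
  have e2 : Complex.exp (0 / 2 - ((t / 2 : ℝ) : ℂ) / 4) * Complex.exp (t / 8) = 1 := by
    rw [← Complex.exp_add, ← Complex.exp_zero]; congr 1; push_cast; ring
  generalize qpT (t / 2) (V - (t / 2 : ℝ)) = Q at *
  generalize Complex.exp (V / 2 - (t / 2 : ℝ) / 4) = E at *
  generalize Complex.exp (0 / 2 - ((t / 2 : ℝ) : ℂ) / 4) = G at *
  generalize qpT (2 * t) (-(t : ℂ)) = P at *
  generalize qpT (2 * t) 0 = a at *
  generalize qpO (2 * t) 0 = b at *
  generalize qpT t (Real.pi * Complex.I - (t / 2 : ℝ)) = X at *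
  generalize qpT t (Real.pi * Complex.I) = Z at *
  have b2' : qpT t V * qpO t V = E * Q * G * P := by
    rw [b3, d3, d1] at b2
    linear_combination b2 / 2
  linear_combination X ^ 2 * b1 + Q * X ^ 2 * d2 + Q * (a + b) * c1
    + (Complex.I * Complex.exp (t / 4) * Complex.exp (-(Complex.I * y))) * Z ^ 2 * b2'
    + (Complex.I * Complex.exp (t / 4) * Complex.exp (-(Complex.I * y))) * E * Q * G * P * c2
    + (a ^ 2 - b ^ 2) * Q * G * P * e1 - (a ^ 2 - b ^ 2) * Q * P * e2

end
end
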